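/- arXiv:0707.1974 — 4 statements merged into one kernel-verified Lean document; each statement's English description precedes it below -/
import Mathlib

section
/- Laplace transform of the Wright M-density (covers equation (2.5) and Lemma part (a)). Let 0 < δ < 1, c > 0 and p > 0. Then ∫_0^∞ e^{−pt}·(cδ/t^{δ+1})·M(c/t^δ; δ) dt = exp(−c·p^δ). In particular, taking δ = 2β with 0 < 2β < 1 and c = τ > 0 gives the inverse Laplace transform L^{−1}(e^{−τ p^{2β}})(t) = (2βτ/t^{2β+1})·M(τ/t^{2β}; 2β), and taking c = (z+ατ)/a gives L{ ((z+ατ)δ)/(a t^{δ+1})·M((z+ατ)/(a t^δ); δ) }(p) = exp(−((z+ατ)/a)·p^δ). -/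
open MeasureTheory Real Filter Set

/-- The Wright-type auxiliary function `M(y; δ)`. -/
noncomputable def Mwr (y δ : ℝ) : ℝ :=
  ∑' n : ℕ, (-y) ^ n / ((n.factorial : ℝ) * Real.Gamma (-δ * (n : ℝ) + 1 - δ))

open Topology
open Complex (I)

/-- If `h` is holomorphic on the slit plane and `r * h (r * exp (θ * I))` tends to `0` at both ends of
the sector between the angles `0` and `φ`, then the integrals of `h` along the two boundary rays,
truncated symmetrically in the logarithmic variable, differ by a null sequence. -/
theorem tendsto_truncated_ray_integral_sub {h : ℂ → ℂ} (hd : DifferentiableOn ℂ h Complex.slitPlane)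
    {φ : ℝ} (hφ : |φ| < π) {B₀ B₁ : ℝ → ℝ} (hB₀ : Tendsto B₀ (𝓝[>] 0) (𝓝 0))
    (hB₁ : Tendsto B₁ atTop (𝓝 0))
    (hb₀ : ∀ᶠ r : ℝ in 𝓝[>] 0, ∀ θ : ℝ, |θ| ≤ |φ| → r * ‖h (r * Complex.exp (θ * I))‖ ≤ B₀ r)
    (hb₁ : ∀ᶠ r : ℝ in atTop, ∀ θ : ℝ, |θ| ≤ |φ| → r * ‖h (r * Complex.exp (θ * I))‖ ≤ B₁ r) :
    Tendsto (fun R : ℝ =>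
      (∫ x in -R..R, Complex.exp (x + φ * I) * h (Complex.exp (x + φ * I))) -
        ∫ x in -R..R, Complex.exp x * h (Complex.exp x)) atTop (𝓝 0) := by
  set g : ℂ → ℂ := fun w => Complex.exp w * h (Complex.exp w) with hg
  have hθ : ∀ θ ∈ uIcc 0 φ, |θ| ≤ |φ| := fun θ hθ => by
    simpa using abs_sub_left_of_mem_uIcc hθ
  have hrect : ∀ R : ℝ, (∫ x in -R..R, g (x + φ * I)) - ∫ x in -R..R, g x =
      I * (∫ y in (0 : ℝ)..φ, g (R + y * I)) - I * ∫ y in (0 : ℝ)..φ, g (-R + y * I) := by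
    intro R
    have key := Complex.integral_boundary_rect_eq_zero_of_differentiableOn g (-R : ℝ) (R + φ * I) ?_
    · simp at key
      linear_combination -key
    · intro w hw
      have him : |w.im| < π := (hθ _ (by simpa using hw.2)).trans_lt hφ
      have hs : Complex.exp w ∈ Complex.slitPlane := by
        rw [Complex.mem_slitPlane_iff_arg, Complex.arg_exp, toIocMod_eq_self _ |>.2]
        · exact ⟨(abs_lt.1 him).2.ne, Complex.exp_ne_zero w⟩
        · constructor <;> linarith [(abs_lt.1 him).1, (abs_lt.1 him).2]
      have h1 : DifferentiableAt ℂ h (Complex.exp w) :=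
        hd.differentiableAt (Complex.isOpen_slitPlane.mem_nhds hs)
      exact (Complex.differentiableAt_exp.mul
        (h1.comp w Complex.differentiableAt_exp)).differentiableWithinAt
  have hnorm : ∀ x y : ℝ, ‖g (x + y * I)‖ = Real.exp x * ‖h ((Real.exp x : ℝ) * Complex.exp (y * I))‖ := by
    intro x y
    simp [hg, Complex.exp_add, Complex.norm_exp]
  have e₁ : Tendsto (fun R : ℝ => ∫ y in (0 : ℝ)..φ, g (R + y * I)) atTop (𝓝 0) := by
    have hlim : Tendsto (fun R : ℝ => B₁ (Real.exp R) * |φ - 0|) atTop (𝓝 0) := by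
      simpa using (hB₁.comp Real.tendsto_exp_atTop).mul_const |φ - 0|
    refine squeeze_zero_norm' ?_ hlim
    filter_upwards [Real.tendsto_exp_atTop.eventually hb₁] with R hR
    refine intervalIntegral.norm_integral_le_of_norm_le_const fun y hy => ?_
    rw [hnorm]
    exact hR y (hθ y (uIoc_subset_uIcc hy))
  have e₀ : Tendsto (fun R : ℝ => ∫ y in (0 : ℝ)..φ, g (-R + y * I)) atTop (𝓝 0) := by
    have hexp : Tendsto (fun R : ℝ => Real.exp (-R)) atTop (𝓝[>] 0) :=
      tendsto_nhdsWithin_iff.2 ⟨Real.tendsto_exp_neg_atTop_nhds_zero,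
        Eventually.of_forall fun R => Real.exp_pos _⟩
    have hlim : Tendsto (fun R : ℝ => B₀ (Real.exp (-R)) * |φ - 0|) atTop (𝓝 0) := by
      simpa using (hB₀.comp hexp).mul_const |φ - 0|
    refine squeeze_zero_norm' ?_ hlim
    filter_upwards [hexp.eventually hb₀] with R hR
    refine intervalIntegral.norm_integral_le_of_norm_le_const fun y hy => ?_
    have := hnorm (-R) y
    push_cast at this
    rw [this]
    have := hR y (hθ y (uIoc_subset_uIcc hy))
    push_cast at this
    exact this
  have := (e₁.const_mul I).sub (e₀.const_mul I)
  simp only [mul_zero, sub_zero] at this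
  exact this.congr fun R => (hrect R).symm

/-- The symmetric truncations, in the logarithmic variable, of an integral along a ray converge. -/
theorem tendsto_truncated_ray_integral {h : ℂ → ℂ} {φ : ℝ}
    (hi : IntegrableOn (fun r : ℝ => h (r * Complex.exp (φ * I))) (Ioi 0)) :
    Tendsto (fun R : ℝ => ∫ x in -R..R, Complex.exp (x + φ * I) * h (Complex.exp (x + φ * I))) atTop
      (𝓝 (∫ r in Ioi (0 : ℝ), Complex.exp (φ * I) * h (r * Complex.exp (φ * I)))) := by
  have himg : Real.exp '' univ = Ioi 0 := by rw [image_univ, Real.range_exp]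
  have hder : ∀ x ∈ univ, HasDerivWithinAt Real.exp (Real.exp x) univ x := fun x _ =>
    (Real.hasDerivAt_exp x).hasDerivWithinAt
  have heq : (fun x : ℝ => |Real.exp x| •
      (Complex.exp (φ * I) * h ((Real.exp x : ℝ) * Complex.exp (φ * I)))) =
      fun x : ℝ => Complex.exp (x + φ * I) * h (Complex.exp (x + φ * I)) := by
    funext x
    rw [abs_of_pos (Real.exp_pos x), Complex.real_smul, Complex.exp_add, Complex.ofReal_exp]
    ring
  have hi' := hi.const_mul (Complex.exp (φ * I))
  rw [← himg, integral_image_eq_integral_abs_deriv_smul MeasurableSet.univ hder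
    Real.exp_injective.injOn, heq, setIntegral_univ]
  change IntegrableOn _ _ _ at hi'
  rw [← himg, integrableOn_image_iff_integrableOn_abs_deriv_smul MeasurableSet.univ hder
    Real.exp_injective.injOn, heq, integrableOn_univ] at hi'
  exact intervalIntegral_tendsto_integral hi' tendsto_neg_atTop_atBot tendsto_id

/-- Powers on the slit plane in polar coordinates. -/
theorem ofReal_mul_exp_cpow {r θ : ℝ} (hr : 0 < r) (hθ : |θ| < π) (ν : ℝ) :
    ((r : ℂ) * Complex.exp (θ * I)) ^ (ν : ℂ) = (r ^ ν : ℝ) * Complex.exp ((ν * θ : ℝ) * I) := by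
  have hlog : (r : ℂ) * Complex.exp (θ * I) = Complex.exp ((Real.log r : ℝ) + θ * I) := by
    rw [Complex.exp_add, ← Complex.ofReal_exp, Real.exp_log hr]
  rw [hlog, Complex.cpow_def_of_ne_zero (Complex.exp_ne_zero _), Complex.log_exp
    (by simpa using (abs_lt.1 hθ).1) (by simpa using (abs_lt.1 hθ).2.le), Real.rpow_def_of_pos hr,
    Complex.ofReal_exp, ← Complex.exp_add]
  push_cast
  ring_nf

theorem cos_le_cos_of_abs_le {x y : ℝ} (hxy : |x| ≤ |y|) (hy : |y| ≤ π) :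
    Real.cos y ≤ Real.cos x := by
  rw [← Real.cos_abs x, ← Real.cos_abs y]
  exact Real.cos_le_cos_of_nonneg_of_le_pi (abs_nonneg x) hy hxy

/-- Euler's integral along a ray in the right half-plane. -/
theorem integral_ray_cpow_mul_exp_neg {ν t ψ : ℝ} (hν : 0 ≤ ν) (ht : 0 < t) (hψ : |ψ| < π / 2) :
    ∫ r in Ioi (0 : ℝ), Complex.exp (ψ * I) * ((r * Complex.exp (ψ * I)) ^ (ν : ℂ) *
      Complex.exp (-t * (r * Complex.exp (ψ * I)))) = (Real.Gamma (ν + 1) / t ^ (ν + 1) : ℝ) := by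
  set h : ℂ → ℂ := fun s => s ^ (ν : ℂ) * Complex.exp (-t * s) with hh
  have hψπ : |ψ| < π := by linarith [Real.pi_pos]
  have hcos : 0 < Real.cos ψ := Real.cos_pos_of_mem_Ioo (by simpa [abs_lt] using abs_lt.1 hψ)
  have hk : 0 < t * Real.cos ψ := mul_pos ht hcos
  have hbound : ∀ r : ℝ, 0 < r → ∀ θ : ℝ, |θ| ≤ |ψ| → ‖h (r * Complex.exp (θ * I))‖ ≤
      r ^ ν * Real.exp (-(t * Real.cos ψ) * r) := by
    intro r hr θ hθ
    simp only [hh]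
    rw [ofReal_mul_exp_cpow hr (hθ.trans_lt hψπ), norm_mul, norm_mul, Complex.norm_exp_ofReal_mul_I,
      Complex.norm_real, Real.norm_of_nonneg (by positivity), mul_one, Complex.norm_exp]
    gcongr
    have := cos_le_cos_of_abs_le hθ hψπ.le
    simp [Complex.exp_re]
    nlinarith [mul_le_mul_of_nonneg_left this (mul_pos ht hr).le]
  have hmeas : ∀ θ : ℝ, AEStronglyMeasurable (fun r : ℝ => h (r * Complex.exp (θ * I)))
      (volume.restrict (Ioi 0)) := fun θ => by
    apply Measurable.aestronglyMeasurable
    fun_prop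
  have hint : ∀ θ : ℝ, |θ| ≤ |ψ| →
      IntegrableOn (fun r : ℝ => h (r * Complex.exp (θ * I))) (Ioi 0) := by
    intro θ hθ
    have hg := integrableOn_rpow_mul_exp_neg_mul_rpow (by linarith : -1 < ν) one_pos hk
    refine Integrable.mono' hg (hmeas θ) ?_
    filter_upwards [ae_restrict_mem measurableSet_Ioi] with r hr
    simpa using hbound r hr θ hθ
  have hd : DifferentiableOn ℂ h Complex.slitPlane := by
    intro s hs
    refine DifferentiableAt.differentiableWithinAt ?_
    refine DifferentiableAt.mul (differentiableAt_id.cpow_const hs) (by fun_prop)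
  have hb : ∀ r : ℝ, 0 < r → ∀ θ : ℝ, |θ| ≤ |ψ| → r * ‖h (r * Complex.exp (θ * I))‖ ≤
      r ^ (ν + 1) * Real.exp (-(t * Real.cos ψ) * r) := by
    intro r hr θ hθ
    rw [Real.rpow_add_one hr.ne']
    nlinarith [mul_le_mul_of_nonneg_left (hbound r hr θ hθ) hr.le]
  have hB₀ : Tendsto (fun r : ℝ => r ^ (ν + 1) * Real.exp (-(t * Real.cos ψ) * r)) (𝓝[>] 0)
      (𝓝 0) := by
    have : ContinuousAt (fun r : ℝ => r ^ (ν + 1) * Real.exp (-(t * Real.cos ψ) * r)) 0 :=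
      (Real.continuousAt_rpow_const _ _ (Or.inr (by linarith))).mul (by fun_prop)
    have h0 := this.tendsto
    simp only [Real.zero_rpow (by linarith : ν + 1 ≠ 0), zero_mul] at h0
    exact h0.mono_left nhdsWithin_le_nhds
  have hB₁ := tendsto_rpow_mul_exp_neg_mul_atTop_nhds_zero (ν + 1) _ hk
  have hsub := tendsto_truncated_ray_integral_sub hd hψπ hB₀ hB₁
    (by filter_upwards [self_mem_nhdsWithin] with r hr using hb r hr)
    (by filter_upwards [eventually_gt_atTop 0] with r hr using hb r hr)
  have h₁ := tendsto_truncated_ray_integral (hint ψ le_rfl)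
  have h₀ := tendsto_truncated_ray_integral (hint 0 (by simp))
  simp only [Complex.ofReal_zero, zero_mul, add_zero, Complex.exp_zero, mul_one, one_mul] at h₀
  have heq := sub_eq_zero.1 (tendsto_nhds_unique (h₁.sub h₀) hsub)
  rw [heq, show (Real.Gamma (ν + 1) / t ^ (ν + 1) : ℝ) =
    ∫ r in Ioi (0 : ℝ), r ^ ν * Real.exp (-(t * r)) by
      have := Real.integral_rpow_mul_exp_neg_mul_Ioi (by linarith : 0 < ν + 1) ht
      rw [add_sub_cancel_right] at this
      rw [this, Real.div_rpow zero_le_one ht.le, Real.one_rpow]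
      ring, ← integral_complex_ofReal]
  refine setIntegral_congr_fun measurableSet_Ioi fun r hr => ?_
  simp only [hh]
  rw [Complex.ofReal_mul, Complex.ofReal_cpow (le_of_lt hr)]
  simp

theorem re_ofReal_mul_exp (r φ : ℝ) : ((r : ℂ) * Complex.exp (φ * I)).re = r * Real.cos φ := by
  simp [Complex.exp_ofReal_mul_I_re]

theorem im_ofReal_mul_exp (r φ : ℝ) : ((r : ℂ) * Complex.exp (φ * I)).im = r * Real.sin φ := by
  simp [Complex.exp_ofReal_mul_I_im]

theorem norm_ofReal_mul_exp {r : ℝ} (hr : 0 ≤ r) (φ : ℝ) :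
    ‖(r : ℂ) * Complex.exp (φ * I)‖ = r := by
  rw [norm_mul, Complex.norm_exp_ofReal_mul_I, Complex.norm_real, Real.norm_of_nonneg hr, mul_one]

theorem add_ray_ne_zero {p φ : ℝ} (hp : 0 < p) (hφ₀ : 0 < φ) (hφ₁ : φ < π) (r : ℝ) :
    (p : ℂ) + r * Complex.exp (φ * I) ≠ 0 := by
  intro h
  have h1 := congrArg Complex.im h
  have h2 := congrArg Complex.re h
  rw [Complex.add_im, im_ofReal_mul_exp] at h1
  rw [Complex.add_re, re_ofReal_mul_exp] at h2
  have hs := Real.sin_pos_of_pos_of_lt_pi hφ₀ hφ₁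
  have hr : r = 0 := by simpa [hs.ne'] using h1
  simp [hr, hp.ne'] at h2

theorem sub_ray_ne_zero {p φ : ℝ} (hp : 0 < p) (hφ₀ : 0 < φ) (hφ₁ : φ < π) (r : ℝ) :
    (p : ℂ) - r * Complex.exp (φ * I) ≠ 0 := by
  have := add_ray_ne_zero hp hφ₀ hφ₁ (-r)
  push_cast at this
  rwa [neg_mul, ← sub_eq_add_neg] at this

theorem norm_add_ray_mul_sub_ray_ge {p φ : ℝ} (hφ₀ : 0 < φ) (hφ₁ : φ < π) (r : ℝ) :
    (p ^ 2 + r ^ 2) * Real.sin φ ≤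
      ‖((p : ℂ) + r * Complex.exp (φ * I)) * (p - r * Complex.exp (φ * I))‖ := by
  have hs := Real.sin_pos_of_pos_of_lt_pi hφ₀ hφ₁
  refine le_of_sq_le_sq ?_ (norm_nonneg _)
  rw [← Complex.normSq_eq_norm_sq, Complex.normSq_mul, Complex.normSq_apply, Complex.normSq_apply,
    Complex.add_re, Complex.add_im, Complex.sub_re, Complex.sub_im, re_ofReal_mul_exp,
    im_ofReal_mul_exp, Complex.ofReal_re, Complex.ofReal_im]
  have h1 : Real.sin φ ^ 2 = 1 - Real.cos φ ^ 2 := Real.sin_sq φ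
  have h2 : 0 ≤ (p ^ 2 - r ^ 2) ^ 2 * Real.cos φ ^ 2 := by positivity
  have h3 : (p ^ 2 + r ^ 2) ^ 2 * Real.sin φ ^ 2 + (p ^ 2 - r ^ 2) ^ 2 * Real.cos φ ^ 2 =
    ((p + r * Real.cos φ) * (p + r * Real.cos φ) + (0 + r * Real.sin φ) * (0 + r * Real.sin φ)) *
    ((p - r * Real.cos φ) * (p - r * Real.cos φ) + (0 - r * Real.sin φ) * (0 - r * Real.sin φ)) := by
    have h4 : Real.sin φ ^ 4 = (1 - Real.cos φ ^ 2) ^ 2 := by rw [← h1]; ring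
    ring_nf
    rw [h4, h1]
    ring
  rw [mul_pow]
  linarith

theorem integrableOn_ray_rational {p φ : ℝ} (hp : 0 < p) (hφ₀ : 0 < φ) (hφ₁ : φ < π) :
    IntegrableOn (fun r : ℝ => 2 * (p : ℂ) /
      ((p + r * Complex.exp (φ * I)) * (p - r * Complex.exp (φ * I)))) (Ioi 0) := by
  have hs := Real.sin_pos_of_pos_of_lt_pi hφ₀ hφ₁
  set m := min 1 (p ^ 2) with hm
  have hm0 : 0 < m := by positivity
  have hi : IntegrableOn (fun r : ℝ => 2 * p / (m * Real.sin φ) * (1 + r ^ 2)⁻¹) (Ioi 0) :=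
    (integrable_inv_one_add_sq.const_mul _).integrableOn
  refine hi.mono' (Measurable.aestronglyMeasurable (by fun_prop)) (Eventually.of_forall fun r => ?_)
  rw [norm_div, norm_mul, Complex.norm_real, Real.norm_of_nonneg hp.le, Complex.norm_ofNat,
    ← div_eq_mul_inv, div_div]
  refine div_le_div_of_nonneg_left (by positivity) (by positivity) ?_
  refine le_trans ?_ (norm_add_ray_mul_sub_ray_ge hφ₀ hφ₁ r)
  have : m * (1 + r ^ 2) ≤ p ^ 2 + r ^ 2 := by
    nlinarith [min_le_left 1 (p ^ 2), min_le_right 1 (p ^ 2), sq_nonneg r]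
  nlinarith [mul_le_mul_of_nonneg_right this hs.le]

theorem integral_ray_rational {p φ : ℝ} (hp : 0 < p) (hφ₀ : 0 < φ) (hφ₁ : φ < π) :
    ∫ r in Ioi (0 : ℝ), Complex.exp (φ * I) * (2 * (p : ℂ) /
      ((p + r * Complex.exp (φ * I)) * (p - r * Complex.exp (φ * I)))) = π * I := by
  have hs := Real.sin_pos_of_pos_of_lt_pi hφ₀ hφ₁
  have hsub := sub_ray_ne_zero hp hφ₀ hφ₁
  have hadd := add_ray_ne_zero hp hφ₀ hφ₁
  set a := Complex.exp (φ * I) with ha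
  set Q : ℝ → ℂ := fun r => -I * ((p + r * a) / (p - r * a)) with hQ
  have hQd : ∀ r : ℝ, HasDerivAt Q (-I * (2 * p * a / (p - r * a) ^ 2)) r := by
    intro r
    have h1 : HasDerivAt (fun r : ℝ => (r : ℂ) * a) a r := by
      simpa using (Complex.ofRealCLM.hasDerivAt (x := r)).mul_const a
    have h2 := ((h1.const_add (p : ℂ)).div (h1.const_sub (p : ℂ)) (hsub r)).const_mul (-I)
    convert! h2 using 2
    ring
  have hQs : ∀ r : ℝ, 0 ≤ r → Q r ∈ Complex.slitPlane := by
    intro r hr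
    rcases hr.eq_or_lt with rfl | hr
    · right
      simp [hQ, hp.ne']
    · left
      have h0 : 0 < Complex.normSq (p - r * a) := Complex.normSq_pos.2 (hsub r)
      have : (Q r).re = 2 * p * r * Real.sin φ / Complex.normSq (p - r * a) := by
        simp only [hQ, Complex.mul_re, Complex.neg_re, Complex.neg_im, Complex.I_re, Complex.I_im,
          Complex.div_im, Complex.add_re, Complex.add_im, Complex.sub_re, Complex.sub_im,
          Complex.ofReal_re, Complex.ofReal_im, ha, Complex.exp_ofReal_mul_I_re,
          Complex.exp_ofReal_mul_I_im, Complex.mul_im]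
        ring
      rw [this]
      positivity
  have hQlim : Tendsto Q atTop (𝓝 I) := by
    have h1 : Tendsto (fun r : ℝ => ((p : ℂ) - r * a)) atTop (Bornology.cobounded ℂ) := by
      rw [← tendsto_norm_atTop_iff_cobounded]
      refine tendsto_atTop_mono' _ ?_ (tendsto_atTop_add_const_right _ (-p) tendsto_id)
      filter_upwards [eventually_ge_atTop 0] with r hr
      have := norm_sub_norm_le ((r : ℂ) * a) p
      rw [norm_ofReal_mul_exp hr, Complex.norm_real, Real.norm_of_nonneg hp.le] at this
      rw [norm_sub_rev]
      simpa [sub_eq_add_neg] using this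
    have h2 := ((tendsto_inv₀_cobounded.comp h1).const_mul (2 * (p : ℂ))).const_add (-1) |>.const_mul
      (-I)
    simp only [mul_zero, add_zero, neg_mul_neg, mul_one] at h2
    refine h2.congr fun r => ?_
    simp only [hQ, Function.comp]
    have := hsub r
    field_simp
    ring
  have key := integral_Ioi_of_hasDerivAt_of_tendsto (f := fun r => Complex.log (Q r))
    (f' := fun r : ℝ => a * (2 * (p : ℂ) / ((p + r * a) * (p - r * a)))) (a := 0)
    (m := Complex.log I)
    ((hQd 0).clog_real (hQs 0 le_rfl)).continuousAt.continuousWithinAt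
    (fun r hr => by
      refine ((hQd r).clog_real (hQs r (le_of_lt hr))).congr_deriv ?_
      have h1 := hsub r
      have h2 := hadd r
      simp only [hQ]
      field_simp [Complex.I_ne_zero])
    ((integrableOn_ray_rational hp hφ₀ hφ₁).const_mul a)
    (hQlim.clog (Or.inr (by simp)))
  rw [key]
  simp only [hQ, Complex.ofReal_zero, zero_mul, add_zero, sub_zero,
    div_self (Complex.ofReal_ne_zero.2 hp.ne'), mul_one, Complex.log_I, Complex.log_neg_I]
  ring

theorem norm_exp_neg_mul_cpow_le {δ c r θ φ : ℝ} (hδ : 0 < δ) (hδ₁ : δ < 1) (hc : 0 < c) (hr : 0 < r)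
    (hφ : |φ| < π) (hθ : |θ| ≤ |φ|) :
    ‖Complex.exp (-c * (r * Complex.exp (θ * I)) ^ (δ : ℂ))‖ ≤
      Real.exp (-(c * Real.cos (δ * φ)) * r ^ δ) := by
  rw [Complex.norm_exp, ofReal_mul_exp_cpow hr (hθ.trans_lt hφ)]
  refine Real.exp_le_exp.2 ?_
  have h1 : Real.cos (δ * φ) ≤ Real.cos (δ * θ) := by
    refine cos_le_cos_of_abs_le ?_ ?_ <;> rw [abs_mul, abs_of_pos hδ]
    · rw [abs_mul, abs_of_pos hδ]
      gcongr
    · nlinarith [abs_nonneg φ]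
  have h2 := re_ofReal_mul_exp (r ^ δ) (δ * θ)
  rw [← Complex.ofReal_neg, Complex.re_ofReal_mul, h2]
  nlinarith [mul_le_mul_of_nonneg_left h1 (mul_pos hc (Real.rpow_pos_of_pos hr δ)).le]

theorem integrableOn_exp_neg_mul_rpow {δ k : ℝ} (hδ : 0 < δ) (hk : 0 < k) :
    IntegrableOn (fun r : ℝ => Real.exp (-k * r ^ δ)) (Ioi 0) := by
  simpa using integrableOn_rpow_mul_exp_neg_mul_rpow (by norm_num : (-1 : ℝ) < 0) hδ hk

/-- The Cauchy formula for `exp (-c * s ^ δ)` on a sector, with the contour folded onto its upper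
boundary ray. -/
theorem im_integral_ray_exp_neg_cpow_div {δ c p φ : ℝ} (hδ : 0 < δ) (hδ₁ : δ < 1) (hc : 0 < c)
    (hp : 0 < p) (hφ₀ : π / 2 < φ) (hφ₁ : φ < π) (hδφ : δ * φ < π / 2) :
    (∫ r in Ioi (0 : ℝ), Complex.exp (φ * I) *
      (Complex.exp (-c * (r * Complex.exp (φ * I)) ^ (δ : ℂ)) / (p - r * Complex.exp (φ * I)))).im =
      π * Real.exp (-c * p ^ δ) := by
  have hφpos : 0 < φ := by linarith [Real.pi_pos]
  have hφπ : |φ| < π := by rwa [abs_of_pos hφpos]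
  have hκ : 0 < c * Real.cos (δ * φ) :=
    mul_pos hc (Real.cos_pos_of_mem_Ioo ⟨by nlinarith [Real.pi_pos], hδφ⟩)
  set κ := c * Real.cos (δ * φ) with hκdef
  set K : ℝ := Real.exp (-c * p ^ δ) with hK
  have hK1 : K ≤ 1 := Real.exp_le_one_iff.2 (by nlinarith [Real.rpow_pos_of_pos hp δ])
  have hK0 : 0 < K := Real.exp_pos _
  set E : ℂ → ℂ := fun s => Complex.exp (-c * s ^ (δ : ℂ)) with hE
  have hEreal : ∀ r : ℝ, 0 < r → E r = (Real.exp (-c * r ^ δ) : ℝ) := fun r hr => by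
    simp only [hE]
    rw [Complex.ofReal_exp, Complex.ofReal_mul, Complex.ofReal_cpow hr.le]
    simp
  set N : ℂ → ℂ := fun s => E s - K * (2 * p / (p + s)) with hN
  have hNp : N p = 0 := by
    simp only [hN]
    rw [hEreal p hp, ← two_mul, div_self (by simp [hp.ne'])]
    simp [hK]
  set h : ℂ → ℂ := dslope N p with hh
  have hval : ∀ s : ℂ, s ≠ p → h s = N s / (s - p) := fun s hs => by
    rw [hh, dslope_of_ne _ hs, slope_def_field, hNp, sub_zero]
  have hd : DifferentiableOn ℂ h Complex.slitPlane := by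
    refine (Complex.differentiableOn_dslope (Complex.isOpen_slitPlane.mem_nhds
      (Or.inl (by simpa using hp)))).2 fun s hs => ?_
    have hps : (p : ℂ) + s ≠ 0 := fun h0 => by
      rw [eq_neg_of_add_eq_zero_right h0] at hs
      rcases hs with hs | hs
      · simp at hs
        linarith
      · simp at hs
    refine DifferentiableAt.differentiableWithinAt ?_
    have h1 : DifferentiableAt ℂ (fun s : ℂ => s ^ (δ : ℂ)) s := differentiableAt_id.cpow_const hs
    exact (h1.const_mul _).cexp.sub (((differentiableAt_const _).div (by fun_prop) hps).const_mul _)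
  have hEb : ∀ r : ℝ, 0 < r → ∀ θ : ℝ, |θ| ≤ |φ| → ‖E (r * Complex.exp (θ * I))‖ ≤
      Real.exp (-κ * r ^ δ) := fun r hr θ hθ => norm_exp_neg_mul_cpow_le hδ hδ₁ hc hr hφπ hθ
  have hfar : ∀ (r θ d : ℝ), 0 < r → |θ| ≤ |φ| → 0 < d → d ≤ |p - r| →
      r * ‖h (r * Complex.exp (θ * I))‖ ≤ r * ((Real.exp (-κ * r ^ δ) + 2 * p / d) / d) := by
    intro r θ d hr hθ hd hdr
    have hns := norm_ofReal_mul_exp hr.le θ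
    set s := (r : ℂ) * Complex.exp (θ * I) with hs
    have hnp : ‖(p : ℂ)‖ = p := by rw [Complex.norm_real, Real.norm_of_nonneg hp.le]
    have hsub : d ≤ ‖s - p‖ := hdr.trans (by
      have := abs_norm_sub_norm_le (p : ℂ) s
      rwa [hns, hnp, norm_sub_rev] at this)
    have hadd : d ≤ ‖(p : ℂ) + s‖ := hdr.trans (by
      have := abs_norm_sub_norm_le (p : ℂ) (-s)
      rwa [norm_neg, hns, hnp, sub_neg_eq_add] at this)
    have hsp : s ≠ p := fun h0 => by
      rw [h0, sub_self, norm_zero] at hsub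
      linarith
    rw [hval s hsp, norm_div]
    gcongr
    refine (norm_sub_le _ _).trans (add_le_add (hEb r hr θ hθ) ?_)
    rw [norm_mul, norm_div, norm_mul, hnp, Complex.norm_real, Real.norm_of_nonneg hK0.le,
      Complex.norm_ofNat]
    calc K * (2 * p / ‖(p : ℂ) + s‖) ≤ 1 * (2 * p / d) := by gcongr
      _ = 2 * p / d := one_mul _
  have hexp : ∀ r : ℝ, 0 < r → Real.exp (-κ * r ^ δ) ≤ 1 := fun r hr =>
    Real.exp_le_one_iff.2 (by nlinarith [Real.rpow_pos_of_pos hr δ])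
  have hb₀ : ∀ᶠ r : ℝ in 𝓝[>] 0, ∀ θ : ℝ, |θ| ≤ |φ| →
      r * ‖h (r * Complex.exp (θ * I))‖ ≤ r * ((1 + 2 * p / (p / 2)) / (p / 2)) := by
    filter_upwards [Ioo_mem_nhdsGT (half_pos hp)] with r hr θ hθ
    refine (hfar r θ (p / 2) hr.1 hθ (half_pos hp) ?_).trans ?_
    · rw [abs_of_nonneg] <;> linarith [hr.2]
    · have := hr.1
      gcongr
      exact hexp r hr.1
  have hB₀ : Tendsto (fun r : ℝ => r * ((1 + 2 * p / (p / 2)) / (p / 2))) (𝓝[>] 0) (𝓝 0) := by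
    have : Continuous (fun r : ℝ => r * ((1 + 2 * p / (p / 2)) / (p / 2))) := by fun_prop
    have h0 := this.tendsto 0
    rw [zero_mul] at h0
    exact h0.mono_left nhdsWithin_le_nhds
  have hb₁ : ∀ᶠ r : ℝ in atTop, ∀ θ : ℝ, |θ| ≤ |φ| →
      r * ‖h (r * Complex.exp (θ * I))‖ ≤ 2 * (Real.exp (-κ * r ^ δ) + 4 * p * r⁻¹) := by
    filter_upwards [eventually_ge_atTop (2 * p)] with r hr θ hθ
    have hr0 : 0 < r := by linarith
    refine (hfar r θ (r / 2) hr0 hθ (half_pos hr0) ?_).trans_eq ?_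
    · rw [abs_of_nonpos] <;> linarith
    · field_simp
      ring
  have hB₁ : Tendsto (fun r : ℝ => 2 * (Real.exp (-κ * r ^ δ) + 4 * p * r⁻¹)) atTop (𝓝 0) := by
    have h1 : Tendsto (fun r : ℝ => Real.exp (-κ * r ^ δ)) atTop (𝓝 0) := by
      have := Real.tendsto_exp_neg_atTop_nhds_zero.comp
        ((tendsto_rpow_atTop hδ).const_mul_atTop hκ)
      simpa [Function.comp_def] using this
    simpa using (h1.add (tendsto_inv_atTop_zero.const_mul (4 * p))).const_mul 2
  have hsub := sub_ray_ne_zero hp hφpos hφ₁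
  have hadd := add_ray_ne_zero hp hφpos hφ₁
  have hR := integrableOn_ray_rational hp hφpos hφ₁
  have hRint := integral_ray_rational hp hφpos hφ₁
  have hlow : ∀ r : ℝ, 0 < r → p ≤ ‖(p : ℂ) - r * Complex.exp (φ * I)‖ := fun r hr => by
    refine le_trans ?_ (Complex.re_le_norm _)
    rw [Complex.sub_re, re_ofReal_mul_exp, Complex.ofReal_re]
    nlinarith [Real.cos_neg_of_pi_div_two_lt_of_lt hφ₀ (by linarith)]
  have hEi : IntegrableOn (fun r : ℝ => E (r * Complex.exp (φ * I)) /
      (p - r * Complex.exp (φ * I))) (Ioi 0) := by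
    refine Integrable.mono' ((integrableOn_exp_neg_mul_rpow hδ hκ).div_const p)
      (Measurable.aestronglyMeasurable (by fun_prop)) ?_
    filter_upwards [ae_restrict_mem measurableSet_Ioi] with r hr
    rw [norm_div]
    gcongr
    · exact hEb r hr φ le_rfl
    · exact hlow r hr
  have hdec : ∀ r : ℝ, h (r * Complex.exp (φ * I)) = K * (2 * (p : ℂ) /
      ((p + r * Complex.exp (φ * I)) * (p - r * Complex.exp (φ * I)))) -
      E (r * Complex.exp (φ * I)) / (p - r * Complex.exp (φ * I)) := fun r => by
    have h1 := hsub r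
    have h2 := hadd r
    have h3 : (r : ℂ) * Complex.exp (φ * I) - p ≠ 0 := by
      rwa [← neg_sub, neg_ne_zero]
    rw [hval _ (sub_ne_zero.1 h3)]
    simp only [hN]
    rw [← neg_sub (p : ℂ)]
    field_simp
    ring
  have hhi : IntegrableOn (fun r : ℝ => h (r * Complex.exp (φ * I))) (Ioi 0) := by
    simp_rw [hdec]
    exact (hR.const_mul _).sub hEi
  have hzero : ∀ R : ℝ, (∫ x in -R..R, Complex.exp x * h (Complex.exp x)).im = 0 := by
    intro R
    have : ∫ x in -R..R, Complex.exp x * h (Complex.exp x) =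
        ∫ x in -R..R, ((Complex.exp x * h (Complex.exp x)).re : ℂ) := by
      refine intervalIntegral.integral_congr_ae ?_
      have : ∀ᵐ x : ℝ, x ≠ Real.log p := by simp [ae_iff]
      filter_upwards [this] with x hx _
      have hne : (Real.exp x : ℂ) ≠ p := fun h0 => hx (by
        rw [← Complex.ofReal_inj.1 h0, Real.log_exp])
      rw [← Complex.ofReal_exp, hval _ hne]
      simp only [hN]
      rw [hEreal _ (Real.exp_pos x)]
      norm_cast
    rw [this, intervalIntegral.integral_ofReal, Complex.ofReal_im]
  have hlim := (tendsto_truncated_ray_integral hhi).sub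
    (tendsto_truncated_ray_integral_sub hd hφπ hB₀ hB₁ hb₀ hb₁)
  simp only [sub_sub_cancel, sub_zero] at hlim
  have him := (Complex.continuous_im.tendsto _).comp hlim
  have him0 : (∫ r in Ioi (0 : ℝ), Complex.exp (φ * I) * h (r * Complex.exp (φ * I))).im = 0 :=
    tendsto_nhds_unique him (by simp [Function.comp_def, hzero])
  have hsplit : ∫ r in Ioi (0 : ℝ), Complex.exp (φ * I) *
      (E (r * Complex.exp (φ * I)) / (p - r * Complex.exp (φ * I))) =
      K * (π * I) - ∫ r in Ioi (0 : ℝ), Complex.exp (φ * I) * h (r * Complex.exp (φ * I)) := by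
    rw [← hRint, ← integral_const_mul, ← integral_sub ((hR.const_mul _).const_mul _)
      (hhi.const_mul _)]
    refine integral_congr_ae (Eventually.of_forall fun r => ?_)
    simp only [hdec]
    ring
  rw [hsplit, Complex.sub_im, him0]
  simp [mul_comm]

theorem integrableOn_exp_rpow_mul_exp_neg {δ c k : ℝ} (hδ : 0 < δ) (hδ₁ : δ < 1) (hk : 0 < k) :
    IntegrableOn (fun r : ℝ => Real.exp (c * r ^ δ) * Real.exp (-k * r)) (Ioi 0) := by
  refine integrable_of_isBigO_exp_neg (half_pos hk) ?_ ?_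
  · have : Continuous fun r : ℝ => r ^ δ := Real.continuous_rpow_const hδ.le
    exact Continuous.continuousOn (by fun_prop)
  · have hlim := (tendsto_rpow_neg_atTop (sub_pos.2 hδ₁)).const_mul c
    rw [mul_zero] at hlim
    refine Asymptotics.IsBigO.of_bound 1 ?_
    filter_upwards [hlim.eventually_le_const (half_pos hk), eventually_gt_atTop 0] with r hr hr0
    rw [← Real.exp_add, Real.norm_of_nonneg (Real.exp_pos _).le,
      Real.norm_of_nonneg (Real.exp_pos _).le, one_mul]
    refine Real.exp_le_exp.2 ?_
    have hpow : r ^ δ = r ^ (-(1 - δ)) * r := by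
      rw [← Real.rpow_add_one hr0.ne']
      ring_nf
    rw [hpow]
    nlinarith [mul_le_mul_of_nonneg_right hr hr0.le]

/-- Expansion in powers of `c` of the Laplace inversion integral of `exp (-c * s ^ δ)` along the ray
of angle `φ`. -/
theorem hasSum_im_integral_ray {δ c t φ : ℝ} (hδ : 0 < δ) (hδ₁ : δ < 1) (hc : 0 < c)
    (ht : 0 < t) (hφ₀ : π / 2 < φ) (hφ₁ : φ < π) :
    HasSum (fun n : ℕ => -((-c) ^ n / n.factorial) * (Real.sin (π * (δ * n)) *
      Real.Gamma (δ * n + 1) / t ^ (δ * n + 1)))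
      (∫ r in Ioi (0 : ℝ), Complex.exp (φ * I) *
        (Complex.exp (-c * (r * Complex.exp (φ * I)) ^ (δ : ℂ)) *
          Complex.exp (t * (r * Complex.exp (φ * I))))).im := by
  have hφpos : 0 < φ := by linarith [Real.pi_pos]
  have hφπ : |φ| < π := by rwa [abs_of_pos hφpos]
  have hcos : Real.cos φ < 0 := Real.cos_neg_of_pi_div_two_lt_of_lt hφ₀ (by linarith)
  have hk : 0 < t * -Real.cos φ := mul_pos ht (neg_pos.2 hcos)
  set ψ := φ - π with hψdef
  have hψ : |ψ| < π / 2 := abs_lt.2 ⟨by linarith, by linarith⟩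
  have hexpψ : Complex.exp (φ * I) = -Complex.exp (ψ * I) := by
    rw [hψdef, Complex.ofReal_sub, sub_mul, Complex.exp_sub, Complex.exp_pi_mul_I]
    ring
  have hnexp : ∀ r : ℝ, ‖Complex.exp (t * (r * Complex.exp (φ * I)))‖ =
      Real.exp (-(t * -Real.cos φ) * r) := fun r => by
    rw [Complex.norm_exp, Complex.re_ofReal_mul, re_ofReal_mul_exp]
    ring_nf
  have hsumexp : ∀ x : ℝ, HasSum (fun n : ℕ => x ^ n / n.factorial) (Real.exp x) := fun x => by
    rw [Real.exp_eq_exp_ℝ]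
    exact NormedSpace.expSeries_div_hasSum_exp x
  have hsum := hasSum_integral_of_dominated_convergence (μ := volume.restrict (Ioi (0 : ℝ)))
    (F := fun (n : ℕ) (r : ℝ) => Complex.exp (φ * I) *
      ((-c * (r * Complex.exp (φ * I)) ^ (δ : ℂ)) ^ n / n.factorial *
        Complex.exp (t * (r * Complex.exp (φ * I)))))
    (f := fun r : ℝ => Complex.exp (φ * I) *
        (Complex.exp (-c * (r * Complex.exp (φ * I)) ^ (δ : ℂ)) *
          Complex.exp (t * (r * Complex.exp (φ * I)))))
    (fun n r => (c * r ^ δ) ^ n / n.factorial * Real.exp (-(t * -Real.cos φ) * r))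
    (fun n => Measurable.aestronglyMeasurable (by fun_prop))
    (fun n => by
      filter_upwards [ae_restrict_mem measurableSet_Ioi] with r hr
      rw [norm_mul, norm_mul, hnexp, norm_div, norm_pow, norm_mul, Complex.norm_exp_ofReal_mul_I,
        ofReal_mul_exp_cpow hr hφπ, norm_ofReal_mul_exp (Real.rpow_nonneg (le_of_lt hr) δ), norm_neg,
        Complex.norm_real, Real.norm_of_nonneg hc.le, one_mul, Complex.norm_natCast])
    (Eventually.of_forall fun r => ((hsumexp (c * r ^ δ)).mul_right _).summable)
    (by
      have : (fun r : ℝ => ∑' n : ℕ, (c * r ^ δ) ^ n / n.factorial *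
          Real.exp (-(t * -Real.cos φ) * r)) =
          fun r : ℝ => Real.exp (c * r ^ δ) * Real.exp (-(t * -Real.cos φ) * r) :=
        funext fun r => ((hsumexp (c * r ^ δ)).mul_right _).tsum_eq
      rw [this]
      exact integrableOn_exp_rpow_mul_exp_neg hδ hδ₁ hk)
    (Eventually.of_forall fun r => by
      refine HasSum.mul_left _ (HasSum.mul_right _ ?_)
      rw [Complex.exp_eq_exp_ℂ]
      exact NormedSpace.expSeries_div_hasSum_exp _)
  have hterm : ∀ n : ℕ, ∫ r in Ioi (0 : ℝ), Complex.exp (φ * I) *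
      ((-c * (r * Complex.exp (φ * I)) ^ (δ : ℂ)) ^ n / n.factorial *
        Complex.exp (t * (r * Complex.exp (φ * I)))) =
      ((-((-c) ^ n / n.factorial) * (Real.Gamma (δ * n + 1) / t ^ (δ * n + 1)) : ℝ) : ℂ) *
        Complex.exp ((π * (δ * n) : ℝ) * I) := by
    intro n
    have hν : 0 ≤ δ * n := by positivity
    rw [Complex.ofReal_mul, ← integral_ray_cpow_mul_exp_neg hν ht hψ, mul_right_comm,
      ← integral_const_mul]
    refine setIntegral_congr_fun measurableSet_Ioi fun r hr => ?_
    have hψπ : |ψ| < π := by linarith [Real.pi_pos]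
    simp only [mul_pow]
    rw [ofReal_mul_exp_cpow hr hφπ, ofReal_mul_exp_cpow hr hψπ, mul_pow, ← Complex.exp_nat_mul,
      Real.rpow_mul (le_of_lt hr), Real.rpow_natCast]
    have hang : Complex.exp (n * ((δ * φ : ℝ) * I)) =
        Complex.exp ((π * (δ * n) : ℝ) * I) * Complex.exp ((δ * n * ψ : ℝ) * I) := by
      rw [← Complex.exp_add, hψdef]
      push_cast
      ring_nf
    rw [hang, hexpψ]
    push_cast
    ring_nf
  have him := Complex.imCLM.hasSum hsum
  simp only [Complex.imCLM_apply, hterm] at him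
  refine him.congr_fun fun n => ?_
  rw [Complex.im_ofReal_mul, Complex.exp_ofReal_mul_I_im]
  ring

theorem sin_mul_Gamma_add_one {x : ℝ} (hx : 0 < x) :
    Real.sin (π * x) * Real.Gamma (x + 1) = π * x / Real.Gamma (1 - x) := by
  have hG := Real.Gamma_pos_of_pos hx
  have href := Real.Gamma_mul_Gamma_one_sub x
  rw [Real.Gamma_add_one hx.ne']
  by_cases hs : Real.sin (π * x) = 0
  · rw [hs, div_zero] at href
    rw [hs, (mul_eq_zero.1 href).resolve_left hG.ne']
    simp
  · have h1 : Real.Gamma (1 - x) ≠ 0 := fun h0 => by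
      rw [h0, mul_zero] at href
      exact div_ne_zero Real.pi_ne_zero hs href.symm
    rw [eq_div_iff hs] at href
    rw [eq_div_iff h1]
    linear_combination x * href

/-- The density built from `Mwr` as a Laplace inversion integral along a ray. -/
theorem wright_density_eq_im_integral_ray {δ c t φ : ℝ} (hδ : 0 < δ) (hδ₁ : δ < 1) (hc : 0 < c)
    (ht : 0 < t) (hφ₀ : π / 2 < φ) (hφ₁ : φ < π) :
    c * δ / t ^ (δ + 1) * Mwr (c / t ^ δ) δ =
      π⁻¹ * (∫ r in Ioi (0 : ℝ), Complex.exp (φ * I) *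
        (Complex.exp (-c * (r * Complex.exp (φ * I)) ^ (δ : ℂ)) *
          Complex.exp (t * (r * Complex.exp (φ * I))))).im := by
  have hsum := hasSum_im_integral_ray hδ hδ₁ hc ht hφ₀ hφ₁
  rw [← hasSum_nat_add_iff' 1] at hsum
  simp only [Finset.sum_range_one, Nat.cast_zero, mul_zero, Real.sin_zero, zero_mul, zero_div,
    sub_zero] at hsum
  rw [Mwr, ← tsum_mul_left, ← (hsum.mul_left π⁻¹).tsum_eq]
  refine tsum_congr fun m => ?_
  have hx : 0 < δ * ((m + 1 : ℕ) : ℝ) := by positivity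
  rw [sin_mul_Gamma_add_one hx]
  have hpow : t ^ (δ * ((m + 1 : ℕ) : ℝ) + 1) = t ^ (δ + 1) * (t ^ δ) ^ m := by
    rw [← Real.rpow_natCast (t ^ δ), ← Real.rpow_mul ht.le, ← Real.rpow_add ht]
    push_cast
    ring_nf
  rw [hpow, show -δ * (m : ℝ) + 1 - δ = 1 - δ * ((m + 1 : ℕ) : ℝ) by push_cast; ring,
    Nat.factorial_succ, pow_succ, ← neg_div, div_pow]
  have hm : ((m : ℝ) + 1) ≠ 0 := by positivity
  have hf : (m.factorial : ℝ) ≠ 0 := by positivity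
  have h1 : t ^ (δ + 1) ≠ 0 := by positivity
  have h2 : t ^ δ ≠ 0 := by positivity
  have h3 := Real.pi_ne_zero
  rcases eq_or_ne (Real.Gamma (1 - δ * ((m + 1 : ℕ) : ℝ))) 0 with h0 | h0
  · rw [h0]
    simp
  · push_cast at h0 ⊢
    field_simp

/-- Laplace transform of the Wright M-density:
`L{ (cδ/t^{δ+1}) M(c/t^δ; δ) }(p) = exp(−c p^δ)` for `0 < δ < 1`, `c > 0`, `p > 0`. -/
theorem laplace_wright_M_density (δ c p : ℝ) (hδ₁ : 0 < δ) (hδ₂ : δ < 1)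
    (hc : 0 < c) (hp : 0 < p) :
    ∫ t in Ioi (0 : ℝ), Real.exp (-p * t) *
        ((c * δ / t ^ (δ + 1)) * Mwr (c / t ^ δ) δ) =
      Real.exp (-c * p ^ δ) := by
  obtain ⟨φ, hφ₀, hφ₁, hδφ⟩ : ∃ φ : ℝ, π / 2 < φ ∧ φ < π ∧ δ * φ < π / 2 := by
    have hπ := Real.pi_pos
    refine ⟨π / (1 + δ), ?_, ?_, ?_⟩
    · gcongr
      linarith
    · rw [div_lt_iff₀ (by linarith)]
      nlinarith
    · rw [mul_div_assoc', div_lt_iff₀ (by linarith)]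
      nlinarith
  have hφpos : 0 < φ := by linarith [Real.pi_pos]
  have hφπ : |φ| < π := by rwa [abs_of_pos hφpos]
  have hcos : Real.cos φ < 0 := Real.cos_neg_of_pi_div_two_lt_of_lt hφ₀ (by linarith)
  have hκ : 0 < c * Real.cos (δ * φ) :=
    mul_pos hc (Real.cos_pos_of_mem_Ioo ⟨by nlinarith [Real.pi_pos], hδφ⟩)
  set F : ℝ → ℝ → ℂ := fun t r => Complex.exp (-p * t) * (Complex.exp (φ * I) *
    (Complex.exp (-c * (r * Complex.exp (φ * I)) ^ (δ : ℂ)) *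
      Complex.exp (t * (r * Complex.exp (φ * I))))) with hF
  have hFint : Integrable (Function.uncurry F)
      ((volume.restrict (Ioi (0 : ℝ))).prod (volume.restrict (Ioi (0 : ℝ)))) := by
    have hg := Integrable.mul_prod (integrableOn_exp_mul_Ioi (neg_neg_of_pos hp) 0)
      (integrableOn_exp_neg_mul_rpow hδ₁ hκ)
    refine hg.mono' (Measurable.aestronglyMeasurable (by simp only [hF]; fun_prop)) ?_
    rw [Measure.prod_restrict]
    filter_upwards [ae_restrict_mem (measurableSet_Ioi.prod measurableSet_Ioi)] with ⟨t, r⟩ ⟨ht, hr⟩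
    simp only [mem_Ioi] at ht hr
    have h1 : ‖Complex.exp (t * (r * Complex.exp (φ * I)))‖ ≤ 1 := by
      rw [Complex.norm_exp, Complex.re_ofReal_mul, re_ofReal_mul_exp, Real.exp_le_one_iff]
      nlinarith [mul_pos ht hr]
    have h2 : ‖Complex.exp (-p * t)‖ = Real.exp (-p * t) := by
      rw [Complex.norm_exp]
      simp
    simp only [Function.uncurry_apply_pair, hF]
    rw [norm_mul, norm_mul, norm_mul, h2, Complex.norm_exp_ofReal_mul_I, one_mul]
    gcongr
    calc _ ≤ Real.exp (-(c * Real.cos (δ * φ)) * r ^ δ) * 1 := by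
          gcongr
          exact norm_exp_neg_mul_cpow_le hδ₁ hδ₂ hc hr hφπ le_rfl
      _ = _ := mul_one _
  have hleft : ∀ t ∈ Ioi (0 : ℝ), Real.exp (-p * t) * (c * δ / t ^ (δ + 1) * Mwr (c / t ^ δ) δ) =
      π⁻¹ * Complex.imCLM (∫ r in Ioi (0 : ℝ), F t r) := fun t ht => by
    rw [wright_density_eq_im_integral_ray hδ₁ hδ₂ hc ht hφ₀ hφ₁]
    simp only [hF]
    rw [integral_const_mul (Complex.exp (-p * t)), Complex.imCLM_apply,
      show Complex.exp (-p * t) = (Real.exp (-p * t) : ℝ) by push_cast; rfl, Complex.im_ofReal_mul]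
    ring
  have hright : ∀ r ∈ Ioi (0 : ℝ), ∫ t in Ioi (0 : ℝ), F t r = Complex.exp (φ * I) *
      (Complex.exp (-c * (r * Complex.exp (φ * I)) ^ (δ : ℂ)) / (p - r * Complex.exp (φ * I))) := by
    intro r hr
    have hre : (-(p - r * Complex.exp (φ * I)) : ℂ).re < 0 := by
      rw [Complex.neg_re, Complex.sub_re, re_ofReal_mul_exp, Complex.ofReal_re]
      nlinarith [mul_neg_of_pos_of_neg (mem_Ioi.1 hr) hcos]
    have hint := integral_exp_mul_complex_Ioi hre 0
    rw [Complex.ofReal_zero, mul_zero, Complex.exp_zero, neg_div_neg_eq] at hint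
    rw [mul_div_assoc', div_eq_mul_one_div, ← hint, ← integral_const_mul]
    refine integral_congr_ae (Eventually.of_forall fun t => ?_)
    simp only [hF]
    rw [show -((p : ℂ) - r * Complex.exp (φ * I)) * t = -p * t + t * (r * Complex.exp (φ * I)) by
      ring, Complex.exp_add]
    ring
  rw [setIntegral_congr_fun measurableSet_Ioi hleft, integral_const_mul,
    Complex.imCLM.integral_comp_comm (φ := fun t => ∫ r in Ioi (0 : ℝ), F t r)
      hFint.integral_prod_left, integral_integral_swap hFint,
    setIntegral_congr_fun measurableSet_Ioi hright, Complex.imCLM_apply,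
    im_integral_ray_exp_neg_cpow_div hδ₁ hδ₂ hc hp hφ₀ hφ₁ hδφ, inv_mul_cancel_left₀ Real.pi_ne_zero]
end

section
/- Laplace transform of the Wright N-function (equation (2.6)). Let 0 < β < 1/2, τ > 0 and p > 0. Then ∫_0^∞ e^{−pt}·N(τ/t^{2β}; β) dt = (1/p)·exp(−τ·p^{2β}). -/
open MeasureTheory Real Filter Set

/-- The Wright-type auxiliary function `N(y; β)`. -/
noncomputable def Nwr (y β : ℝ) : ℝ :=
  ∑' n : ℕ, (-y) ^ n / ((n.factorial : ℝ) * Real.Gamma (-2 * β * (n : ℝ) + 1))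

/-- The integrals of a holomorphic function along the two sides of a horizontal strip agree
asymptotically if the function decays uniformly at both ends of the strip. -/
lemma tendsto_integral_sub_integral_of_strip {F : ℂ → ℂ} {a b : ℝ} {B₁ B₂ : ℝ → ℝ}
    (hF : DifferentiableOn ℂ F {z | z.im ∈ uIcc a b})
    (htop : ∀ᶠ x : ℝ in atTop, ∀ y ∈ uIcc a b, ‖F (x + y * Complex.I)‖ ≤ B₁ x)
    (hB₁ : Tendsto B₁ atTop (nhds 0))
    (hbot : ∀ᶠ x : ℝ in atTop, ∀ y ∈ uIcc a b, ‖F ((-x : ℝ) + y * Complex.I)‖ ≤ B₂ x)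
    (hB₂ : Tendsto B₂ atTop (nhds 0)) :
    Tendsto (fun R : ℝ => (∫ x in -R..R, F (x + a * Complex.I)) -
      ∫ x in -R..R, F (x + b * Complex.I)) atTop (nhds 0) := by
  have hlim : Tendsto (fun R => B₂ R * |b - a| + B₁ R * |b - a|) atTop (nhds 0) := by
    simpa using (hB₂.mul_const |b - a|).add (hB₁.mul_const |b - a|)
  refine squeeze_zero_norm' ?_ hlim
  filter_upwards [htop, hbot] with R h₁ h₂
  have key := Complex.integral_boundary_rect_eq_zero_of_differentiableOn F
    (⟨-R, a⟩ : ℂ) (⟨R, b⟩ : ℂ) (hF.mono fun z hz => hz.2)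
  have e₁ : ‖∫ y in a..b, F ((R : ℝ) + y * Complex.I)‖ ≤ B₁ R * |b - a| :=
    intervalIntegral.norm_integral_le_of_norm_le_const fun y hy => h₁ y (uIoc_subset_uIcc hy)
  have e₂ : ‖∫ y in a..b, F ((-R : ℝ) + y * Complex.I)‖ ≤ B₂ R * |b - a| :=
    intervalIntegral.norm_integral_le_of_norm_le_const fun y hy => h₂ y (uIoc_subset_uIcc hy)
  have e₃ : (∫ x in -R..R, F (x + a * Complex.I)) - ∫ x in -R..R, F (x + b * Complex.I) =
      Complex.I * (∫ y in a..b, F ((-R : ℝ) + y * Complex.I)) -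
        Complex.I * ∫ y in a..b, F ((R : ℝ) + y * Complex.I) := by
    simp only [smul_eq_mul] at key
    linear_combination key
  rw [e₃]
  refine (norm_sub_le _ _).trans ?_
  simpa using add_le_add e₂ e₁

lemma integral_Ioi_zero_eq_integral_exp (f : ℝ → ℂ) :
    ∫ r in Ioi (0 : ℝ), f r = ∫ x : ℝ, (rexp x : ℂ) * f (rexp x) := by
  have h := integral_image_eq_integral_abs_deriv_smul (s := univ) (f := rexp) (f' := rexp)
    MeasurableSet.univ (fun x _ => (Real.hasDerivAt_exp x).hasDerivWithinAt)
    Real.exp_injective.injOn f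
  simpa [Set.image_univ, Real.range_exp, abs_of_pos (Real.exp_pos _), -Complex.ofReal_exp] using h

lemma integrableOn_Ioi_zero_iff_integrable_exp (f : ℝ → ℂ) :
    IntegrableOn f (Ioi 0) ↔ Integrable fun x : ℝ => (rexp x : ℂ) * f (rexp x) := by
  have h := integrableOn_image_iff_integrableOn_abs_deriv_smul (s := univ) (f := rexp) (f' := rexp)
    MeasurableSet.univ (fun x _ => (Real.hasDerivAt_exp x).hasDerivWithinAt)
    Real.exp_injective.injOn f
  simpa [Set.image_univ, Real.range_exp, abs_of_pos (Real.exp_pos _), -Complex.ofReal_exp] using h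

lemma integrableOn_rpow_mul_exp_neg_mul {a k : ℝ} (ha : 0 < a) (hk : 0 < k) :
    IntegrableOn (fun r : ℝ => r ^ (a - 1) * rexp (-(k * r))) (Ioi 0) := by
  have := integrableOn_rpow_mul_exp_neg_mul_rpow (p := 1) (s := a - 1) (by linarith) one_pos hk
  simpa using this

lemma norm_cexp_ofReal_mul_neg (r : ℝ) (c : ℂ) :
    ‖Complex.exp (-(r * c))‖ = rexp (-(c.re * r)) := by
  simp [Complex.norm_exp, mul_comm]

lemma integrableOn_rpow_mul_cexp_neg_mul {a : ℝ} {c : ℂ} (ha : 0 < a) (hc : 0 < c.re) :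
    IntegrableOn (fun r : ℝ => ((r ^ (a - 1) : ℝ) : ℂ) * Complex.exp (-(r * c))) (Ioi 0) := by
  refine (integrableOn_rpow_mul_exp_neg_mul ha hc).mono' ?_ ?_
  · exact Measurable.aestronglyMeasurable (by fun_prop)
  · filter_upwards [ae_restrict_mem measurableSet_Ioi] with r hr
    rw [norm_mul, norm_cexp_ofReal_mul_neg, Complex.norm_real, Real.norm_of_nonneg]
    exact Real.rpow_nonneg (le_of_lt hr) _

lemma cexp_neg_mul_I_re (φ : ℝ) : (Complex.exp (-φ * Complex.I)).re = cos φ := by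
  have : (-φ * Complex.I : ℂ) = ((-φ : ℝ) : ℂ) * Complex.I := by push_cast; ring
  rw [this, Complex.exp_ofReal_mul_I_re, Real.cos_neg]

/-- The Euler integral for the Gamma function along a rotated ray. -/
lemma integral_rpow_mul_cexp_neg_rotated {a φ : ℝ} (ha : 0 < a) (hφ₀ : 0 ≤ φ) (hφ : φ < π / 2) :
    ∫ r in Ioi (0 : ℝ), ((r ^ (a - 1) : ℝ) : ℂ) * Complex.exp (-(r * Complex.exp (-φ * Complex.I)))
      = Real.Gamma a * Complex.exp (a * φ * Complex.I) := by
  set F : ℂ → ℂ := fun w => Complex.exp (a * w - Complex.exp w) with hFdef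
  have hval : ∀ ψ : ℝ, ∀ x : ℝ, (rexp x : ℂ) * (((rexp x ^ (a - 1) : ℝ) : ℂ) *
      Complex.exp (-((rexp x : ℝ) * Complex.exp (-ψ * Complex.I)))) =
      Complex.exp (a * ψ * Complex.I) * F (x + (-ψ : ℝ) * Complex.I) := by
    intro ψ x
    rw [← Real.exp_mul]
    simp only [hFdef, Complex.ofReal_exp, ← Complex.exp_add]
    congr 1
    push_cast
    ring
  have hint : ∀ ψ : ℝ, 0 ≤ ψ → ψ < π / 2 →
      Integrable fun x : ℝ => F (x + (-ψ : ℝ) * Complex.I) := by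
    intro ψ h0 h1
    have hc : 0 < cos ψ := Real.cos_pos_of_mem_Ioo ⟨by linarith [Real.pi_pos], h1⟩
    have h := (integrableOn_Ioi_zero_iff_integrable_exp _).1
      (integrableOn_rpow_mul_cexp_neg_mul ha (c := Complex.exp (-ψ * Complex.I))
        (by rw [cexp_neg_mul_I_re]; exact hc))
    simp_rw [hval] at h
    refine (h.const_mul (Complex.exp (a * ψ * Complex.I))⁻¹).congr (ae_of_all _ fun x => ?_)
    simp only
    rw [inv_mul_cancel_left₀ (Complex.exp_ne_zero _)]
  have hcφ : 0 < cos φ := Real.cos_pos_of_mem_Ioo ⟨by linarith [Real.pi_pos], hφ⟩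
  have hnorm : ∀ x : ℝ, ∀ y ∈ uIcc (-0 : ℝ) (-φ),
      ‖F (x + y * Complex.I)‖ ≤ rexp (a * x - cos φ * rexp x) := by
    intro x y hy
    rw [neg_zero, uIcc_of_ge (by linarith)] at hy
    have hcos : cos φ ≤ cos y := by
      rw [← Real.cos_neg y]
      exact Real.cos_le_cos_of_nonneg_of_le_pi (by linarith [hy.2]) (by linarith [Real.pi_pos])
        (by linarith [hy.1])
    rw [hFdef, Complex.norm_exp]
    simp only [Complex.sub_re, Complex.exp_re, Complex.add_re, Complex.mul_re, Complex.ofReal_re,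
      Complex.ofReal_im, Complex.I_re, Complex.I_im, Complex.add_im, Complex.mul_im]
    simp only [mul_zero, zero_mul, sub_zero, add_zero, mul_one, zero_add]
    refine Real.exp_le_exp.2 ?_
    nlinarith [Real.exp_pos x]
  have hlim := tendsto_integral_sub_integral_of_strip (F := F) (a := (-0 : ℝ)) (b := -φ)
    (B₁ := fun x => rexp (a * x - cos φ * rexp x)) (B₂ := fun x => rexp (-(a * x)))
    (Differentiable.differentiableOn (by fun_prop)) (Eventually.of_forall hnorm) ?_
    (Eventually.of_forall fun x y hy => (hnorm (-x) y hy).trans ?_) ?_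
  · have h0 := intervalIntegral_tendsto_integral (hint 0 le_rfl (by positivity))
      tendsto_neg_atTop_atBot tendsto_id
    have h1 := intervalIntegral_tendsto_integral (hint φ hφ₀ hφ)
      tendsto_neg_atTop_atBot tendsto_id
    have heq := sub_eq_zero.1 (tendsto_nhds_unique (h0.sub h1) hlim)
    have hG : ∫ x : ℝ, F (x + (-0 : ℝ) * Complex.I) = Real.Gamma a := by
      have h := Real.integral_rpow_mul_exp_neg_mul_Ioi ha one_pos
      have h2 := integral_Ioi_zero_eq_integral_exp fun r : ℝ =>
        ((r ^ (a - 1) : ℝ) : ℂ) * Complex.exp (-(r * Complex.exp (-(0 : ℝ) * Complex.I)))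
      simp_rw [hval] at h2
      rw [integral_const_mul] at h2
      simp only [Complex.ofReal_zero, neg_zero, zero_mul, Complex.exp_zero, mul_one, mul_zero,
        one_mul, div_one, Real.one_rpow] at h h2 ⊢
      rw [← h2, ← h, ← integral_complex_ofReal]
      push_cast
      rfl
    rw [integral_Ioi_zero_eq_integral_exp]
    simp_rw [hval]
    rw [integral_const_mul, ← heq, hG, mul_comm]
  · refine Real.tendsto_exp_atBot.comp ?_
    have h1 : Tendsto (fun x : ℝ => rexp x / x ^ (1 : ℝ)) atTop atTop :=
      tendsto_exp_div_rpow_atTop 1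
    have h2 : Tendsto (fun x : ℝ => x * (cos φ * (rexp x / x ^ (1 : ℝ)) - a)) atTop atTop :=
      tendsto_id.atTop_mul_atTop₀ (tendsto_atTop_add_const_right _ _ (h1.const_mul_atTop hcφ))
    refine (tendsto_neg_atTop_atBot.comp h2).congr' ?_
    filter_upwards [eventually_gt_atTop 0] with x hx
    simp only [Function.comp, Real.rpow_one]
    field_simp
    ring
  · gcongr
    nlinarith [mul_pos hcφ (Real.exp_pos (-x))]
  · exact Real.tendsto_exp_atBot.comp
      (tendsto_neg_atTop_atBot.comp (tendsto_id.const_mul_atTop ha))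

/-- The Laplace transform of a power along a rotated ray. -/
lemma integral_rpow_mul_cexp_rotated {a φ t : ℝ} (ha : 0 < a) (hφ₀ : 0 ≤ φ) (hφ : φ < π / 2)
    (ht : 0 < t) :
    ∫ r in Ioi (0 : ℝ), ((r ^ (a - 1) : ℝ) : ℂ) *
      Complex.exp (-(r * (t * Complex.exp (-φ * Complex.I))))
      = ((t ^ (-a) * Real.Gamma a : ℝ) : ℂ) * Complex.exp (a * φ * Complex.I) := by
  have h := integral_comp_mul_left_Ioi (fun r : ℝ => ((r ^ (a - 1) : ℝ) : ℂ) *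
      Complex.exp (-(r * Complex.exp (-φ * Complex.I)))) 0 ht
  rw [mul_zero, integral_rpow_mul_cexp_neg_rotated ha hφ₀ hφ] at h
  have h2 : ∫ r in Ioi (0 : ℝ), (((t * r) ^ (a - 1) : ℝ) : ℂ) *
      Complex.exp (-((t * r : ℝ) * Complex.exp (-φ * Complex.I))) =
      ((t ^ (a - 1) : ℝ) : ℂ) * ∫ r in Ioi (0 : ℝ), ((r ^ (a - 1) : ℝ) : ℂ) *
      Complex.exp (-(r * (t * Complex.exp (-φ * Complex.I)))) := by
    rw [← integral_const_mul]
    refine setIntegral_congr_fun measurableSet_Ioi fun r hr => ?_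
    rw [Real.mul_rpow ht.le (le_of_lt hr)]
    push_cast
    ring_nf
  rw [h2] at h
  have ht1 : ((t ^ (a - 1) : ℝ) : ℂ) ≠ 0 := by
    exact_mod_cast (Real.rpow_pos_of_pos ht _).ne'
  apply mul_left_cancel₀ ht1
  rw [h, Real.rpow_neg ht.le, Real.rpow_sub_one ht.ne', Complex.real_smul]
  have : t ^ a ≠ 0 := (Real.rpow_pos_of_pos ht _).ne'
  have h3 : (t : ℂ) ≠ 0 := by exact_mod_cast ht.ne'
  have h4 : ((t ^ a : ℝ) : ℂ) ≠ 0 := by exact_mod_cast this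
  push_cast
  field_simp

lemma Gamma_add_le_rpow_mul_Gamma {x s : ℝ} (hx : 0 < x) (hs₀ : 0 < s) (hs₁ : s < 1) :
    Real.Gamma (x + s) ≤ x ^ s * Real.Gamma x := by
  have h := Real.Gamma_mul_add_mul_le_rpow_Gamma_mul_rpow_Gamma hx (by linarith : 0 < x + 1)
    (by linarith : 0 < 1 - s) hs₀ (by ring)
  have hG := Real.Gamma_pos_of_pos hx
  have e : (1 - s) * x + s * (x + 1) = x + s := by ring
  rw [e, Real.Gamma_add_one hx.ne', Real.mul_rpow hx.le hG.le, mul_left_comm,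
    ← Real.rpow_add hG, sub_add_cancel, Real.rpow_one] at h
  exact h

lemma summable_pow_div_factorial_mul_Gamma {α x : ℝ} (hα₀ : 0 < α) (hα₁ : α < 1) (hx : 0 < x) :
    Summable fun n : ℕ =>
      x ^ (n + 1) / ((n + 1).factorial : ℝ) * Real.Gamma (α * ((n + 1 : ℕ) : ℝ)) := by
  have hm : ∀ n : ℕ, (0 : ℝ) < ((n + 1 : ℕ) : ℝ) := fun n => by positivity
  have hG : ∀ n : ℕ, 0 < Real.Gamma (α * ((n + 1 : ℕ) : ℝ)) :=
    fun n => Real.Gamma_pos_of_pos (mul_pos hα₀ (hm n))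
  have hpos : ∀ n : ℕ,
      0 < x ^ (n + 1) / ((n + 1).factorial : ℝ) * Real.Gamma (α * ((n + 1 : ℕ) : ℝ)) :=
    fun n => mul_pos (by positivity) (hG n)
  refine summable_of_ratio_test_tendsto_lt_one zero_lt_one
    (Eventually.of_forall fun n => (hpos n).ne') ?_
  have hlim : Tendsto (fun n : ℕ => x * ((n + 1 : ℕ) : ℝ) ^ (-(1 - α))) atTop (nhds 0) := by
    have h := (tendsto_rpow_neg_atTop (by linarith : 0 < 1 - α)).comp
      (tendsto_natCast_atTop_atTop.comp (tendsto_add_atTop_nat 1))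
    simpa using h.const_mul x
  refine squeeze_zero (fun n => by positivity) (fun n => ?_) hlim
  rw [Real.norm_of_nonneg (hpos _).le, Real.norm_of_nonneg (hpos _).le, div_le_iff₀ (hpos n)]
  have h1 : Real.Gamma (α * ((n + 1 + 1 : ℕ) : ℝ)) ≤
      ((n + 1 : ℕ) : ℝ) ^ α * Real.Gamma (α * ((n + 1 : ℕ) : ℝ)) := by
    have e : α * ((n + 1 + 1 : ℕ) : ℝ) = α * ((n + 1 : ℕ) : ℝ) + α := by push_cast; ring
    rw [e]
    refine (Gamma_add_le_rpow_mul_Gamma (mul_pos hα₀ (hm n)) hα₀ hα₁).trans ?_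
    refine mul_le_mul_of_nonneg_right ?_ (hG n).le
    refine Real.rpow_le_rpow (mul_pos hα₀ (hm n)).le ?_ hα₀.le
    nlinarith [hm n]
  have h2 : ((n + 1 : ℕ) : ℝ) ^ (-(1 - α)) = ((n + 1 : ℕ) : ℝ) ^ α / ((n + 1 : ℕ) : ℝ) := by
    rw [neg_sub, Real.rpow_sub_one (hm n).ne']
  rw [h2, Nat.factorial_succ (n + 1)]
  set G := Real.Gamma (α * ((n + 1 : ℕ) : ℝ))
  set m := ((n + 1 : ℕ) : ℝ)
  have hf : (0 : ℝ) < ((n + 1).factorial : ℝ) := by positivity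
  have hmm : m ≤ ((n + 1 + 1 : ℕ) : ℝ) := by simp [m]
  have hm0 : 0 < m := hm n
  calc x ^ (n + 1 + 1) / (((n + 1 + 1) * (n + 1).factorial : ℕ) : ℝ) *
        Real.Gamma (α * ((n + 1 + 1 : ℕ) : ℝ))
      ≤ x ^ (n + 1 + 1) / (m * ((n + 1).factorial : ℝ)) * (m ^ α * G) := by
        refine mul_le_mul ?_ h1 (Real.Gamma_pos_of_pos (mul_pos hα₀ (hm (n + 1)))).le
          (by positivity)
        rw [Nat.cast_mul]
        gcongr
    _ = x * (m ^ α / m) * (x ^ (n + 1) / ((n + 1).factorial : ℝ) * G) := by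
        field_simp
        ring

lemma norm_cexp_neg_sub_one_le {w : ℂ} (hw : 0 ≤ w.re) : ‖Complex.exp (-w) - 1‖ ≤ ‖w‖ := by
  have h := Convex.norm_image_sub_le_of_norm_deriv_le (𝕜 := ℂ) (f := Complex.exp)
    (s := {z : ℂ | z.re ≤ 0}) (x := 0) (y := -w) (C := 1) (fun z _ => Complex.differentiableAt_exp)
    (fun z hz => by
      rw [Complex.deriv_exp, Complex.norm_exp]
      exact Real.exp_le_one_iff.2 hz)
    (convex_halfSpace_re_le 0) (by simp) (by simpa using hw)
  simpa using h

lemma hasSum_pow_succ_div_factorial (z : ℂ) :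
    HasSum (fun n : ℕ => z ^ (n + 1) / ((n + 1).factorial : ℂ)) (Complex.exp z - 1) := by
  have h := NormedSpace.expSeries_div_hasSum_exp z
  rw [← Complex.exp_eq_exp_ℂ] at h
  have := (hasSum_nat_add_iff' 1).2 h
  simpa using this

/-- Expansion of the ray integral of `(exp (-c r ^ α) - 1) / r` in powers of `c`. -/
lemma hasSum_integral_ray {α φ t : ℝ} (c : ℂ) (hα₀ : 0 < α) (hα₁ : α < 1) (hφ₀ : 0 ≤ φ)
    (hφ : φ < π / 2) (ht : 0 < t) :
    HasSum (fun n : ℕ => (-c) ^ (n + 1) / ((n + 1).factorial : ℂ) *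
        (((t ^ (-(α * ((n + 1 : ℕ) : ℝ))) * Real.Gamma (α * ((n + 1 : ℕ) : ℝ)) : ℝ) : ℂ) *
          Complex.exp ((α * ((n + 1 : ℕ) : ℝ) : ℝ) * φ * Complex.I)))
      (∫ r in Ioi (0 : ℝ), Complex.exp (-(r * (t * Complex.exp (-φ * Complex.I)))) *
        ((Complex.exp (-(c * (r ^ α : ℝ))) - 1) / r)) := by
  rcases eq_or_ne c 0 with rfl | hc
  · simp
  set F : ℕ → ℝ → ℂ := fun n r => (-c) ^ (n + 1) / ((n + 1).factorial : ℂ) *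
    (((r ^ (α * ((n + 1 : ℕ) : ℝ) - 1) : ℝ) : ℂ) *
      Complex.exp (-(r * (t * Complex.exp (-φ * Complex.I))))) with hFdef
  have ha : ∀ n : ℕ, 0 < α * ((n + 1 : ℕ) : ℝ) := fun n => mul_pos hα₀ (by positivity)
  have hcos : 0 < cos φ := Real.cos_pos_of_mem_Ioo ⟨by linarith [Real.pi_pos], hφ⟩
  have hre : (t * Complex.exp (-φ * Complex.I)).re = t * cos φ := by
    rw [Complex.re_ofReal_mul, cexp_neg_mul_I_re]
  have hk : 0 < t * cos φ := mul_pos ht hcos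
  have hint : ∀ n, IntegrableOn (F n) (Ioi 0) := fun n =>
    (integrableOn_rpow_mul_cexp_neg_mul (ha n) (by rw [hre]; exact hk)).const_mul _
  have hsum : Summable fun n => ∫ r in Ioi (0 : ℝ), ‖F n r‖ := by
    have hx : 0 < ‖c‖ * (1 / (t * cos φ)) ^ α := by
      have := norm_pos_iff.2 hc
      positivity
    refine (summable_pow_div_factorial_mul_Gamma hα₀ hα₁ hx).congr fun n => ?_
    have e : ∀ r ∈ Ioi (0 : ℝ), ‖F n r‖ = ‖c‖ ^ (n + 1) / ((n + 1).factorial : ℝ) *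
        (r ^ (α * ((n + 1 : ℕ) : ℝ) - 1) * rexp (-(t * cos φ * r))) := by
      intro r hr
      simp only [hFdef]
      rw [norm_mul, norm_mul, norm_cexp_ofReal_mul_neg, hre, Complex.norm_real,
        Real.norm_of_nonneg (Real.rpow_nonneg (le_of_lt hr) _), norm_div, norm_pow, norm_neg,
        Complex.norm_natCast]
    rw [setIntegral_congr_fun measurableSet_Ioi e, integral_const_mul,
      Real.integral_rpow_mul_exp_neg_mul_Ioi (ha n) hk, mul_pow,
      Real.rpow_mul (by positivity), Real.rpow_natCast]
    ring
  have h := hasSum_integral_of_summable_integral_norm hint hsum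
  have e1 : ∀ n, ∫ r in Ioi (0 : ℝ), F n r = (-c) ^ (n + 1) / ((n + 1).factorial : ℂ) *
        (((t ^ (-(α * ((n + 1 : ℕ) : ℝ))) * Real.Gamma (α * ((n + 1 : ℕ) : ℝ)) : ℝ) : ℂ) *
          Complex.exp ((α * ((n + 1 : ℕ) : ℝ) : ℝ) * φ * Complex.I)) := by
    intro n
    rw [integral_const_mul, integral_rpow_mul_cexp_rotated (ha n) hφ₀ hφ ht]
  have e2 : ∀ r ∈ Ioi (0 : ℝ), ∑' n, F n r =
      Complex.exp (-(r * (t * Complex.exp (-φ * Complex.I)))) *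
        ((Complex.exp (-(c * (r ^ α : ℝ))) - 1) / r) := by
    intro r hr
    have hs := ((hasSum_pow_succ_div_factorial (-(c * (r ^ α : ℝ)))).div_const (r : ℂ)).mul_left
      (Complex.exp (-(r * (t * Complex.exp (-φ * Complex.I)))))
    refine (tsum_congr fun n => ?_).trans hs.tsum_eq
    simp only [hFdef]
    rw [Real.rpow_sub_one (ne_of_gt hr), Real.rpow_mul (le_of_lt hr), Real.rpow_natCast,
      ← neg_mul c, mul_pow]
    push_cast
    ring
  rw [setIntegral_congr_fun measurableSet_Ioi e2] at h
  simp_rw [e1] at h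
  exact h

lemma Gamma_mul_sin_eq (s : ℝ) (hs : 0 < s) :
    Real.Gamma s * sin (π * s) = π / Real.Gamma (1 - s) := by
  have h := Real.Gamma_mul_Gamma_one_sub s
  have hG := (Real.Gamma_pos_of_pos hs).ne'
  by_cases h0 : sin (π * s) = 0
  · rw [h0, div_zero] at h
    rw [h0, (mul_eq_zero.1 h).resolve_left hG]
    simp
  · rw [eq_div_iff h0] at h
    have h1 : Real.Gamma (1 - s) ≠ 0 := by
      intro h1
      rw [h1] at h
      simp [Real.pi_ne_zero.symm] at h
    rw [eq_div_iff h1]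
    linarith

/-- Ray representation of `Nwr`. -/
lemma im_integral_ray_eq_Nwr {α φ τ t : ℝ} (hα₀ : 0 < α) (hα₁ : α < 1) (hφ₀ : 0 ≤ φ)
    (hφ : φ < π / 2) (hαφ : (1 + α) * φ = π * α) (ht : 0 < t) :
    (∫ r in Ioi (0 : ℝ), Complex.exp (-(r * (t * Complex.exp (-φ * Complex.I)))) *
        ((Complex.exp (-(τ * Complex.exp (φ * Complex.I) * (r ^ α : ℝ))) - 1) / r)).im =
      π * (Nwr (τ / t ^ α) (α / 2) - 1) := by
  have h := Complex.hasSum_im (hasSum_integral_ray (τ * Complex.exp (φ * Complex.I)) hα₀ hα₁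
    hφ₀ hφ ht)
  have hterm : ∀ n : ℕ, ((-(τ * Complex.exp (φ * Complex.I))) ^ (n + 1) / ((n + 1).factorial : ℂ) *
        (((t ^ (-(α * ((n + 1 : ℕ) : ℝ))) * Real.Gamma (α * ((n + 1 : ℕ) : ℝ)) : ℝ) : ℂ) *
          Complex.exp ((α * ((n + 1 : ℕ) : ℝ) : ℝ) * φ * Complex.I))).im =
      π * ((-(τ / t ^ α)) ^ (n + 1) / (((n + 1).factorial : ℝ) *
        Real.Gamma (-2 * (α / 2) * ((n + 1 : ℕ) : ℝ) + 1))) := by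
    intro n
    set m := ((n + 1 : ℕ) : ℝ) with hm
    have hm0 : 0 < m := by positivity
    have e1 : (-(τ * Complex.exp (φ * Complex.I))) ^ (n + 1) =
        (((-τ) ^ (n + 1) : ℝ) : ℂ) * Complex.exp (m * φ * Complex.I) := by
      rw [← neg_mul, mul_pow, ← Complex.exp_nat_mul, hm]
      push_cast
      ring_nf
    have e2 : Complex.exp (m * φ * Complex.I) * Complex.exp ((α * m : ℝ) * φ * Complex.I) =
        Complex.exp ((π * (α * m) : ℝ) * Complex.I) := by
      rw [← Complex.exp_add]
      congr 1
      have : (m * φ + α * m * φ : ℝ) = π * (α * m) := by linear_combination m * hαφ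
      rw [← this]
      push_cast
      ring
    have e3 : t ^ (-(α * m)) = ((t ^ α)⁻¹) ^ (n + 1) := by
      rw [Real.rpow_neg ht.le, Real.rpow_mul ht.le, hm, Real.rpow_natCast, inv_pow]
    have e4 := Gamma_mul_sin_eq (α * m) (mul_pos hα₀ hm0)
    have e5 : ∀ A B C : ℝ, ∀ E₁ E₂ : ℂ, (A : ℂ) * E₁ / (B : ℂ) * ((C : ℂ) * E₂) =
        ((A / B * C : ℝ) : ℂ) * (E₁ * E₂) := by
      intros
      push_cast
      ring
    have e6 : -2 * (α / 2) * m + 1 = 1 - α * m := by ring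
    have e7 : ((n + 1).factorial : ℂ) = (((n + 1).factorial : ℝ) : ℂ) := by simp
    rw [e1, e7, e5, e2, Complex.im_ofReal_mul, Complex.exp_ofReal_mul_I_im, e3, e6]
    calc (-τ) ^ (n + 1) / ((n + 1).factorial : ℝ) *
          ((t ^ α)⁻¹ ^ (n + 1) * Real.Gamma (α * m)) * sin (π * (α * m))
        = (-τ) ^ (n + 1) / ((n + 1).factorial : ℝ) * (t ^ α)⁻¹ ^ (n + 1) *
          (Real.Gamma (α * m) * sin (π * (α * m))) := by ring
      _ = π * ((-(τ / t ^ α)) ^ (n + 1) / (((n + 1).factorial : ℝ) *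
        Real.Gamma (1 - α * m))) := by
          rw [e4, ← neg_div, div_pow, inv_pow]
          ring
  simp_rw [hterm] at h
  have h3 := h.mul_left π⁻¹
  simp_rw [inv_mul_cancel_left₀ Real.pi_ne_zero] at h3
  have h4 := (hasSum_nat_add_iff (f := fun n : ℕ => (-(τ / t ^ α)) ^ n / ((n.factorial : ℝ) *
      Real.Gamma (-2 * (α / 2) * (n : ℝ) + 1))) 1).1 h3
  have h5 : Nwr (τ / t ^ α) (α / 2) = _ := h4.tsum_eq
  rw [h5]
  simp [Real.pi_ne_zero]

lemma integrableOn_rpow_div_one_add_mul {α k : ℝ} (hα₀ : 0 < α) (hα₁ : α < 1) (hk : 0 < k) :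
    IntegrableOn (fun r : ℝ => r ^ (α - 1) / (1 + k * r)) (Ioi 0) := by
  rw [← Ioc_union_Ioi_eq_Ioi zero_le_one]
  refine IntegrableOn.union ?_ ?_
  · have h : IntegrableOn (fun r : ℝ => r ^ (α - 1)) (Ioc 0 1) :=
      (intervalIntegrable_iff_integrableOn_Ioc_of_le zero_le_one).1
        (intervalIntegral.intervalIntegrable_rpow' (by linarith))
    refine h.mono' (Measurable.aestronglyMeasurable (by fun_prop)) ?_
    filter_upwards [ae_restrict_mem measurableSet_Ioc] with r hr
    have hr0 : 0 < r := hr.1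
    rw [Real.norm_of_nonneg (by positivity)]
    exact div_le_self (by positivity) (by nlinarith)
  · have h := (integrableOn_Ioi_rpow_of_lt (by linarith : α - 1 - 1 < -1) one_pos).const_mul k⁻¹
    refine h.mono' (Measurable.aestronglyMeasurable (by fun_prop)) ?_
    filter_upwards [ae_restrict_mem measurableSet_Ioi] with r hr
    have hr0 : 0 < r := one_pos.trans hr
    rw [Real.norm_of_nonneg (by positivity), Real.rpow_sub_one hr0.ne' (α - 1)]
    calc r ^ (α - 1) / (1 + k * r) ≤ r ^ (α - 1) / (k * r) := by gcongr; linarith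
      _ = k⁻¹ * (r ^ (α - 1) / r) := by field_simp

lemma norm_cexp_neg_sub_one_sub_le {τ c : ℝ} {w : ℂ} (hτ : 0 ≤ τ) (hw : 0 ≤ w.re) :
    ‖Complex.exp (-(τ * w)) - 1 - c * w‖ ≤ (τ + |c|) * ‖w‖ := by
  have h := norm_cexp_neg_sub_one_le (w := τ * w) (by
    rw [Complex.re_ofReal_mul]; exact mul_nonneg hτ hw)
  rw [norm_mul, Complex.norm_real, Real.norm_of_nonneg hτ] at h
  refine (norm_sub_le _ _).trans ?_
  rw [norm_mul, Complex.norm_real, Real.norm_eq_abs]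
  linarith

lemma one_sub_cexp_ne_zero {w : ℂ} (hw : w ≠ 0) (h₀ : 0 ≤ w.im) (h₁ : w.im < π) :
    1 - Complex.exp w ≠ 0 := by
  intro h
  obtain ⟨n, hn⟩ := Complex.exp_eq_one_iff.1 (sub_eq_zero.1 h).symm
  have him : w.im = n * (2 * π) := by
    rw [hn]
    simp
  have hn0 : n = 0 := by
    have hπ := Real.pi_pos
    have a : (n : ℝ) < 1 := by nlinarith
    have b : (-1 : ℝ) < n := by nlinarith
    have a' : n < 1 := by exact_mod_cast a
    have b' : -1 < n := by exact_mod_cast b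
    omega
  simp [hn0] at hn
  exact hw hn

/-- The integral of `(exp (-τ z ^ α) - 1 - (exp (-τ) - 1) z ^ α) / (z (1 - z))` along a ray in the
upper half plane on which `exp (-τ z ^ α)` decays is real. -/
lemma im_integral_ray_eq_zero {α φ τ : ℝ} (hα₀ : 0 < α) (hα₁ : α < 1) (hφ₀ : 0 < φ)
    (hφ : φ < π / 2) (hαφ : (1 + α) * φ = π * α) (hτ : 0 < τ)
    (hint : IntegrableOn (fun r : ℝ => ((1 + r * Complex.exp (-φ * Complex.I)) : ℂ)⁻¹ *
        ((Complex.exp (-(τ * (Complex.exp (φ * Complex.I) * (r ^ α : ℝ)))) - 1 -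
        (rexp (-τ) - 1 : ℝ) * (Complex.exp (φ * Complex.I) * (r ^ α : ℝ))) / r)) (Ioi 0)) :
    (∫ r in Ioi (0 : ℝ), ((1 + r * Complex.exp (-φ * Complex.I)) : ℂ)⁻¹ *
        ((Complex.exp (-(τ * (Complex.exp (φ * Complex.I) * (r ^ α : ℝ)))) - 1 -
        (rexp (-τ) - 1 : ℝ) * (Complex.exp (φ * Complex.I) * (r ^ α : ℝ))) / r)).im = 0 := by
  set c : ℝ := rexp (-τ) - 1 with hc
  set g : ℂ → ℂ := fun w => Complex.exp (-(τ * Complex.exp (α * w))) - 1 -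
    c * Complex.exp (α * w) with hg
  set h : ℂ → ℂ := fun w => 1 - Complex.exp w with hh
  set F : ℂ → ℂ := fun w => dslope g 0 w / dslope h 0 w with hF
  have hg0 : g 0 = 0 := by simp [hg, hc]
  have hh0 : h 0 = 0 := by simp [hh]
  have hFne : ∀ w, w ≠ 0 → F w = g w / h w := by
    intro w hw
    simp only [hF, dslope_of_ne _ hw, slope_def_field, hg0, hh0, sub_zero]
    field_simp
  have hgd : Differentiable ℂ (dslope g 0) := by
    rw [← differentiableOn_univ, Complex.differentiableOn_dslope univ_mem, differentiableOn_univ]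
    fun_prop
  have hhd : Differentiable ℂ (dslope h 0) := by
    rw [← differentiableOn_univ, Complex.differentiableOn_dslope univ_mem, differentiableOn_univ]
    fun_prop
  have hπ := Real.pi_pos
  have hθ₀ : 0 ≤ π - φ := by linarith
  have hne : ∀ w : ℂ, w.im ∈ uIcc 0 (π - φ) → dslope h 0 w ≠ 0 := by
    intro w hw
    rw [uIcc_of_le hθ₀] at hw
    rcases eq_or_ne w 0 with rfl | hw0
    · rw [dslope_same]
      have hd : HasDerivAt h (-Complex.exp 0) 0 := (Complex.hasDerivAt_exp 0).const_sub 1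
      rw [hd.deriv, Complex.exp_zero]
      norm_num
    · rw [dslope_of_ne _ hw0, slope_def_field, hh0, sub_zero, sub_zero]
      exact div_ne_zero (one_sub_cexp_ne_zero hw0 hw.1 (by linarith [hw.2])) hw0
  have hFd : DifferentiableOn ℂ F {z | z.im ∈ uIcc 0 (π - φ)} :=
    hgd.differentiableOn.div hhd.differentiableOn hne
  have hnum : ∀ x : ℝ, ∀ y ∈ uIcc 0 (π - φ),
      ‖g (x + y * Complex.I)‖ ≤ (τ + |c|) * rexp (α * x) := by
    intro x y hy
    rw [uIcc_of_le hθ₀] at hy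
    have e : (α * (x + y * Complex.I) : ℂ) = (α * x : ℝ) + (α * y : ℝ) * Complex.I := by
      push_cast; ring
    have hy2 : α * y ≤ φ := by nlinarith [hy.2]
    have hb := norm_cexp_neg_sub_one_sub_le (c := c) (w := Complex.exp (α * (x + y * Complex.I)))
      hτ.le (by
        rw [e, Complex.exp_add, ← Complex.ofReal_exp, Complex.re_ofReal_mul,
          Complex.exp_ofReal_mul_I_re]
        exact mul_nonneg (Real.exp_pos _).le
          (Real.cos_nonneg_of_mem_Icc ⟨by nlinarith [hy.1], by linarith⟩))
    refine hb.trans_eq ?_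
    rw [e, Complex.norm_exp]
    simp
  have hden : ∀ x y : ℝ, |1 - rexp x| ≤ ‖h (x + y * Complex.I)‖ := by
    intro x y
    have := abs_norm_sub_norm_le (1 : ℂ) (Complex.exp (x + y * Complex.I))
    simpa [Complex.norm_exp] using this
  have hM : 0 < τ + |c| := by positivity
  have hbound : ∀ x : ℝ, ∀ y ∈ uIcc 0 (π - φ), ∀ d : ℝ, 0 < d → d ≤ |1 - rexp x| →
      ‖F (x + y * Complex.I)‖ ≤ (τ + |c|) * (rexp (α * x) / d) := by
    intro x y hy d hd hdx
    have hw : (x + y * Complex.I : ℂ) ≠ 0 := by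
      intro hw
      have hre := congrArg Complex.re hw
      simp at hre
      rw [hre] at hdx
      simp at hdx
      linarith
    rw [hFne _ hw, norm_div, ← mul_div_assoc]
    exact div_le_div₀ (by positivity) (hnum x y hy) hd (hdx.trans (hden x y))
  have hlim := tendsto_integral_sub_integral_of_strip (F := F) (a := 0) (b := π - φ)
    (B₁ := fun x => (τ + |c|) * (2 * rexp (-((1 - α) * x))))
    (B₂ := fun x => (τ + |c|) * (2 * rexp (-(α * x)))) hFd ?_ ?_ ?_ ?_
  · have hval : ∀ x : ℝ, (rexp x : ℂ) * (((1 + (rexp x : ℝ) * Complex.exp (-φ * Complex.I)) : ℂ)⁻¹ *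
        ((Complex.exp (-(τ * (Complex.exp (φ * Complex.I) * (rexp x ^ α : ℝ)))) - 1 -
        c * (Complex.exp (φ * Complex.I) * (rexp x ^ α : ℝ))) / (rexp x : ℝ))) =
        F (x + (π - φ : ℝ) * Complex.I) := by
      intro x
      have hw : (x + (π - φ : ℝ) * Complex.I : ℂ) ≠ 0 := by
        intro hw
        have him := congrArg Complex.im hw
        simp at him
        linarith
      have hx0 : (rexp x : ℂ) ≠ 0 := by exact_mod_cast (Real.exp_pos x).ne'
      have e1 : h (x + (π - φ : ℝ) * Complex.I) =
          1 + (rexp x : ℝ) * Complex.exp (-φ * Complex.I) := by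
        have : (x + (π - φ : ℝ) * Complex.I : ℂ) = x + -φ * Complex.I + π * Complex.I := by
          push_cast; ring
        simp only [hh]
        rw [this, Complex.exp_add, Complex.exp_pi_mul_I, Complex.exp_add, Complex.ofReal_exp]
        ring
      have e2 : Complex.exp (φ * Complex.I) * (rexp x ^ α : ℝ) =
          Complex.exp (α * (x + (π - φ : ℝ) * Complex.I)) := by
        rw [← Real.exp_mul, Complex.ofReal_exp, ← Complex.exp_add]
        congr 1
        have : φ = α * (π - φ) := by linarith
        have e : (φ : ℂ) = α * (π - φ : ℝ) := by exact_mod_cast this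
        push_cast at e ⊢
        linear_combination Complex.I * e
      rw [hFne _ hw, e1, e2]
      simp only [hg]
      field_simp
    have hint' := (integrableOn_Ioi_zero_iff_integrable_exp _).1 hint
    rw [integral_Ioi_zero_eq_integral_exp]
    simp_rw [hval] at hint' ⊢
    have h1 := intervalIntegral_tendsto_integral hint' tendsto_neg_atTop_atBot tendsto_id
    have h2 := (Complex.continuous_im.tendsto _).comp (hlim.add h1)
    simp only [zero_add] at h2
    refine tendsto_nhds_unique h2 (tendsto_const_nhds.congr' (Eventually.of_forall fun R => ?_))
    have hreal : ∀ x : ℝ, x ≠ 0 → F (x + (0 : ℝ) * Complex.I) =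
        (((rexp (-(τ * rexp (α * x))) - 1 - c * rexp (α * x)) / (1 - rexp x) : ℝ) : ℂ) := by
      intro x hx
      have : (x + (0 : ℝ) * Complex.I : ℂ) = x := by simp
      rw [this, hFne _ (by exact_mod_cast hx)]
      simp only [hg, hh]
      push_cast
      rfl
    have hcongr : ∫ x in -R..R, F (x + (0 : ℝ) * Complex.I) = ∫ x in -R..R,
        (((rexp (-(τ * rexp (α * x))) - 1 - c * rexp (α * x)) / (1 - rexp x) : ℝ) : ℂ) := by
      refine intervalIntegral.integral_congr_ae ?_
      filter_upwards [Measure.ae_ne volume (0 : ℝ)] with x hx _ using hreal x hx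
    simp only [Function.comp, id, sub_add_cancel]
    rw [hcongr, intervalIntegral.integral_ofReal, Complex.ofReal_im]
  · filter_upwards [eventually_ge_atTop 1] with x hx y hy
    have hx2 : 2 ≤ rexp x := by linarith [Real.add_one_le_exp x]
    refine (hbound x y hy (rexp x / 2) (by positivity) ?_).trans_eq ?_
    · rw [abs_sub_comm, abs_of_nonneg] <;> linarith
    · have : -((1 - α) * x) = α * x - x := by ring
      rw [this, Real.exp_sub]
      field_simp
  · have := Real.tendsto_exp_atBot.comp (tendsto_neg_atTop_atBot.comp
      (tendsto_id.const_mul_atTop (by linarith : 0 < 1 - α)))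
    simpa using (this.const_mul 2).const_mul (τ + |c|)
  · filter_upwards [eventually_ge_atTop 1] with x hx y hy
    have hx2 : 2 ≤ rexp x := by linarith [Real.add_one_le_exp x]
    refine (hbound (-x) y hy (1 / 2) (by positivity) ?_).trans_eq ?_
    · have : rexp (-x) ≤ 1 / 2 := by
        rw [Real.exp_neg, one_div]
        exact inv_anti₀ two_pos hx2
      rw [abs_of_nonneg] <;> linarith
    · rw [mul_neg]
      ring
  · have := Real.tendsto_exp_atBot.comp (tendsto_neg_atTop_atBot.comp
      (tendsto_id.const_mul_atTop hα₀))
    simpa using (this.const_mul 2).const_mul (τ + |c|)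

/-- The Laplace transform of `t ↦ Nwr (τ / t ^ α) (α / 2)` at `1`. -/
lemma integral_exp_neg_mul_Nwr {α τ : ℝ} (hα₀ : 0 < α) (hα₁ : α < 1) (hτ : 0 < τ) :
    ∫ t in Ioi (0 : ℝ), rexp (-t) * Nwr (τ / t ^ α) (α / 2) = rexp (-τ) := by
  obtain ⟨φ, hαφ⟩ : ∃ φ : ℝ, (1 + α) * φ = π * α :=
    ⟨π * α / (1 + α), by field_simp⟩
  have hπ := Real.pi_pos
  have hφ₀ : 0 < φ := by
    by_contra! hle
    nlinarith [mul_pos hπ hα₀]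
  have hφ : φ < π / 2 := by
    by_contra! hle
    nlinarith
  have hcos : 0 < cos φ := Real.cos_pos_of_mem_Ioo ⟨by linarith, hφ⟩
  set c : ℝ := rexp (-τ) - 1 with hc
  set ω : ℂ := Complex.exp (φ * Complex.I) with hω
  set ξ : ℂ := Complex.exp (-φ * Complex.I) with hξ
  have hξre : ξ.re = cos φ := cexp_neg_mul_I_re φ
  have hωre : ω.re = cos φ := Complex.exp_ofReal_mul_I_re φ
  have hωn : ‖ω‖ = 1 := Complex.norm_exp_ofReal_mul_I φ
  set q : ℝ → ℂ := fun r => (Complex.exp (-(τ * (ω * (r ^ α : ℝ)))) - 1 -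
    c * (ω * (r ^ α : ℝ))) / r with hq
  have hqm : Measurable q := by fun_prop
  have hqb : ∀ r : ℝ, 0 < r → ‖q r‖ ≤ (τ + |c|) * r ^ (α - 1) := by
    intro r hr
    have hra : 0 ≤ r ^ α := by positivity
    have hb := norm_cexp_neg_sub_one_sub_le (c := c) (w := ω * (r ^ α : ℝ)) hτ.le (by
      rw [Complex.re_mul_ofReal, hωre]
      positivity)
    rw [norm_mul, hωn, one_mul, Complex.norm_real, Real.norm_of_nonneg hra] at hb
    rw [hq, norm_div, Complex.norm_real, Real.norm_of_nonneg hr.le, Real.rpow_sub_one hr.ne',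
      ← mul_div_assoc]
    gcongr
  have hre : ∀ r : ℝ, (1 + r * ξ).re = 1 + r * cos φ := by
    intro r
    rw [Complex.add_re, Complex.re_ofReal_mul, hξre, Complex.one_re]
  have hrepos : ∀ r : ℝ, 0 < r → 0 < (1 + r * ξ).re := fun r hr => by
    rw [hre]
    positivity
  -- Fubini for the kernel `exp (-(t * (1 + r * ξ))) * q r`
  set f : ℝ → ℝ → ℂ := fun t r => Complex.exp (-(t * (1 + r * ξ))) * q r with hf
  have hfm : Measurable (Function.uncurry f) := by
    simp only [hf, Function.uncurry_def]
    fun_prop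
  have hexp : ∀ r : ℝ, 0 < r →
      IntegrableOn (fun t : ℝ => Complex.exp (-(t * (1 + r * ξ)))) (Ioi 0) ∧
      ∫ t in Ioi (0 : ℝ), Complex.exp (-(t * (1 + r * ξ))) = (1 + r * ξ)⁻¹ := by
    intro r hr
    have hneg : (-(1 + r * ξ)).re < 0 := by
      rw [Complex.neg_re]
      linarith [hrepos r hr]
    have e : ∀ t : ℝ, Complex.exp (-(t * (1 + r * ξ))) = Complex.exp (-(1 + r * ξ) * t) :=
      fun t => by ring_nf
    simp_rw [e]
    refine ⟨integrableOn_exp_mul_complex_Ioi hneg 0, ?_⟩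
    rw [integral_exp_mul_complex_Ioi hneg 0, Complex.ofReal_zero, mul_zero, Complex.exp_zero,
      neg_div_neg_eq, one_div]
  have hdom : IntegrableOn (fun r : ℝ => (τ + |c|) * (r ^ (α - 1) / (1 + cos φ * r))) (Ioi 0) :=
    (integrableOn_rpow_div_one_add_mul hα₀ hα₁ hcos).const_mul _
  have hfint : Integrable (Function.uncurry f)
      ((volume.restrict (Ioi 0)).prod (volume.restrict (Ioi 0))) := by
    rw [integrable_prod_iff' hfm.aestronglyMeasurable]
    constructor
    · filter_upwards [ae_restrict_mem measurableSet_Ioi] with r hr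
      exact (hexp r hr).1.mul_const (q r)
    · refine hdom.mono' ?_ ?_
      · exact (hfm.norm.stronglyMeasurable.integral_prod_left
          (μ := volume.restrict (Ioi 0))).aestronglyMeasurable
      · filter_upwards [ae_restrict_mem measurableSet_Ioi] with r hr
        have hr0 : 0 < r := hr
        have hn : ∀ t : ℝ, ‖Function.uncurry f (t, r)‖ =
            rexp (-((1 + r * ξ).re * t)) * ‖q r‖ := by
          intro t
          simp only [Function.uncurry, hf]
          rw [norm_mul, norm_cexp_ofReal_mul_neg]
        have hI : ∫ t in Ioi (0 : ℝ), rexp (-((1 + r * ξ).re * t)) = ((1 + r * ξ).re)⁻¹ := by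
          have := Real.integral_rpow_mul_exp_neg_mul_Ioi one_pos (hrepos r hr)
          simpa using this
        simp_rw [hn]
        rw [integral_mul_const, hI, hre, Real.norm_of_nonneg (by positivity), mul_comm,
          ← div_eq_mul_inv, ← mul_div_assoc, mul_comm (cos φ)]
        gcongr
        exact hqb r hr
  have hQint : IntegrableOn (fun r : ℝ => (1 + r * ξ)⁻¹ * q r) (Ioi 0) := by
    refine hfint.integral_prod_right.congr ?_
    filter_upwards [ae_restrict_mem measurableSet_Ioi] with r hr
    simp only [Function.uncurry, hf]
    rw [integral_mul_const, (hexp r hr).2]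
  have hswap : ∫ t in Ioi (0 : ℝ), ∫ r in Ioi (0 : ℝ), f t r =
      ∫ r in Ioi (0 : ℝ), (1 + r * ξ)⁻¹ * q r := by
    rw [integral_integral_swap hfint]
    refine setIntegral_congr_fun measurableSet_Ioi fun r hr => ?_
    simp only [hf]
    rw [integral_mul_const, (hexp r hr).2]
  have hzero : (∫ r in Ioi (0 : ℝ), (1 + r * ξ)⁻¹ * q r).im = 0 :=
    im_integral_ray_eq_zero hα₀ hα₁ hφ₀ hφ hαφ hτ hQint
  -- the inner integral in terms of `Nwr`
  have hinner : ∀ t : ℝ, 0 < t → (∫ r in Ioi (0 : ℝ), f t r).im =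
      π * (rexp (-t) * Nwr (τ / t ^ α) (α / 2) - rexp (-t) -
        c / Real.Gamma (1 - α) * (t ^ (-α) * rexp (-t))) := by
    intro t ht
    have hk : 0 < (t * ξ).re := by
      rw [Complex.re_ofReal_mul, hξre]
      positivity
    have hi2 := (integrableOn_rpow_mul_cexp_neg_mul hα₀ hk).const_mul (c * ω)
    have hi1 : IntegrableOn (fun r : ℝ => Complex.exp (-(r * (t * ξ))) *
        ((Complex.exp (-(τ * ω * (r ^ α : ℝ))) - 1) / r)) (Ioi 0) := by
      refine ((integrableOn_rpow_mul_exp_neg_mul hα₀ hk).const_mul τ).mono'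
        (Measurable.aestronglyMeasurable (by fun_prop)) ?_
      filter_upwards [ae_restrict_mem measurableSet_Ioi] with r hr
      have hr0 : 0 < r := hr
      have hra : 0 ≤ r ^ α := by positivity
      have hb := norm_cexp_neg_sub_one_le (w := τ * ω * (r ^ α : ℝ)) (by
        rw [Complex.re_mul_ofReal, Complex.re_ofReal_mul, hωre]
        positivity)
      rw [norm_mul, norm_mul, hωn, Complex.norm_real, Complex.norm_real, mul_one,
        Real.norm_of_nonneg hra, Real.norm_of_nonneg hτ.le] at hb
      rw [norm_mul, norm_cexp_ofReal_mul_neg, norm_div, Complex.norm_real,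
        Real.norm_of_nonneg hr0.le, Real.rpow_sub_one hr0.ne', mul_comm, ← mul_assoc,
        ← mul_div_assoc]
      gcongr
    have hsplit : ∫ r in Ioi (0 : ℝ), f t r = (rexp (-t) : ℝ) *
        ((∫ r in Ioi (0 : ℝ), Complex.exp (-(r * (t * ξ))) *
          ((Complex.exp (-(τ * ω * (r ^ α : ℝ))) - 1) / r)) -
        ∫ r in Ioi (0 : ℝ), c * ω * (((r ^ (α - 1) : ℝ) : ℂ) *
          Complex.exp (-(r * (t * ξ))))) := by
      rw [← integral_sub hi1 hi2, ← integral_const_mul]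
      refine setIntegral_congr_fun measurableSet_Ioi fun r hr => ?_
      have hr0 : (r : ℂ) ≠ 0 := by exact_mod_cast (ne_of_gt hr)
      have e : Complex.exp (-(t * (1 + r * ξ))) =
          (rexp (-t) : ℝ) * Complex.exp (-(r * (t * ξ))) := by
        rw [Complex.ofReal_exp, ← Complex.exp_add]
        push_cast
        ring_nf
      simp only [hf, hq]
      rw [e, Real.rpow_sub_one (ne_of_gt hr)]
      push_cast
      field_simp
    have hpow : (∫ r in Ioi (0 : ℝ), c * ω * (((r ^ (α - 1) : ℝ) : ℂ) *
          Complex.exp (-(r * (t * ξ))))).im = c * (t ^ (-α) * (π / Real.Gamma (1 - α))) := by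
      rw [integral_const_mul, integral_rpow_mul_cexp_rotated hα₀ hφ₀.le hφ ht]
      have e : c * ω * (((t ^ (-α) * Real.Gamma α : ℝ) : ℂ) *
          Complex.exp (α * φ * Complex.I)) =
          ((c * (t ^ (-α) * Real.Gamma α) : ℝ) : ℂ) * Complex.exp ((π * α : ℝ) * Complex.I) := by
        have e2 : ω * Complex.exp (α * φ * Complex.I) =
            Complex.exp ((π * α : ℝ) * Complex.I) := by
          rw [hω, ← Complex.exp_add, ← hαφ]
          push_cast
          ring_nf
        rw [← e2]
        push_cast
        ring
      rw [e, Complex.im_ofReal_mul, Complex.exp_ofReal_mul_I_im, ← Gamma_mul_sin_eq α hα₀]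
      ring
    rw [hsplit, Complex.im_ofReal_mul, Complex.sub_im, hpow,
      im_integral_ray_eq_Nwr hα₀ hα₁ hφ₀.le hφ hαφ ht]
    ring
  have hDint : IntegrableOn (fun t : ℝ => (∫ r in Ioi (0 : ℝ), f t r).im) (Ioi 0) :=
    hfint.integral_prod_left.im
  have hD : ∫ t in Ioi (0 : ℝ), (∫ r in Ioi (0 : ℝ), f t r).im = 0 := by
    have h := integral_im hfint.integral_prod_left
    simp only [RCLike.im_to_complex, Function.uncurry] at h
    rw [h, hswap, hzero]
  have hE : IntegrableOn (fun t : ℝ => rexp (-t)) (Ioi 0) := by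
    simpa using integrableOn_rpow_mul_exp_neg_mul one_pos one_pos
  have hEI : ∫ t in Ioi (0 : ℝ), rexp (-t) = 1 := by
    simpa using Real.integral_rpow_mul_exp_neg_mul_Ioi one_pos one_pos
  have hPe : 1 - α - 1 = -α := by ring
  have hP : IntegrableOn (fun t : ℝ => t ^ (-α) * rexp (-t)) (Ioi 0) := by
    simpa [hPe] using integrableOn_rpow_mul_exp_neg_mul (by linarith : 0 < 1 - α) one_pos
  have hPI : ∫ t in Ioi (0 : ℝ), t ^ (-α) * rexp (-t) = Real.Gamma (1 - α) := by
    simpa [hPe] using Real.integral_rpow_mul_exp_neg_mul_Ioi (by linarith : 0 < 1 - α) one_pos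
  have hG : Real.Gamma (1 - α) ≠ 0 := (Real.Gamma_pos_of_pos (by linarith)).ne'
  calc ∫ t in Ioi (0 : ℝ), rexp (-t) * Nwr (τ / t ^ α) (α / 2)
      = ∫ t in Ioi (0 : ℝ), (π⁻¹ * (∫ r in Ioi (0 : ℝ), f t r).im + rexp (-t) +
          c / Real.Gamma (1 - α) * (t ^ (-α) * rexp (-t))) := by
        refine setIntegral_congr_fun measurableSet_Ioi fun t ht => ?_
        rw [hinner t ht, inv_mul_cancel_left₀ Real.pi_ne_zero]
        ring
    _ = rexp (-τ) := by
        have hS : IntegrableOn (fun t : ℝ => π⁻¹ * (∫ r in Ioi (0 : ℝ), f t r).im + rexp (-t))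
            (Ioi 0) := (hDint.const_mul _).add hE
        rw [integral_add hS (hP.const_mul _),
          integral_add (hDint.const_mul _) hE, integral_const_mul, integral_const_mul, hD, hEI,
          hPI, div_mul_cancel₀ _ hG, hc]
        ring

/-- Laplace transform of the Wright N-function:
`L{ N(τ/t^{2β}; β) }(p) = (1/p) exp(−τ p^{2β})` for `0 < β < 1/2`, `τ > 0`, `p > 0`. -/
theorem laplace_wright_N (β τ p : ℝ) (hβ₁ : 0 < β) (hβ₂ : β < 1 / 2)
    (hτ : 0 < τ) (hp : 0 < p) :
    ∫ t in Ioi (0 : ℝ), Real.exp (-p * t) * Nwr (τ / t ^ (2 * β)) β =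
      (1 / p) * Real.exp (-τ * p ^ (2 * β)) := by
  have h := integral_comp_mul_left_Ioi (fun s : ℝ => rexp (-s) *
    Nwr (τ * p ^ (2 * β) / s ^ (2 * β)) β) 0 hp
  have hN := integral_exp_neg_mul_Nwr (α := 2 * β) (τ := τ * p ^ (2 * β)) (by linarith)
    (by linarith) (by positivity)
  rw [mul_div_cancel_left₀ β two_ne_zero] at hN
  rw [mul_zero, hN, smul_eq_mul, ← one_div, ← neg_mul] at h
  rw [← h]
  refine setIntegral_congr_fun measurableSet_Ioi fun t ht => ?_
  have ht0 : 0 < t := ht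
  have hpp : p ^ (2 * β) ≠ 0 := (Real.rpow_pos_of_pos hp _).ne'
  rw [Real.mul_rpow hp.le ht0.le, mul_comm τ, mul_div_mul_left _ _ hpp, neg_mul]
end

section
/- The Wright function is entire. Let λ, μ be real numbers with λ > −1 and μ > 0. Then for every complex number z the series W(z; λ, μ) = ∑_{n=0}^∞ z^n/(n!·Γ(λn + μ)) converges absolutely (the family n ↦ z^n/(n!·Γ(λn+μ)) is summable for all z ∈ ℂ); equivalently, the power series ∑ z^n/(n!·Γ(λn+μ)) has infinite radius of convergence. -/
open Complex

/-- On the positive half-line the reciprocal Gamma function is bounded. -/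
lemma exists_inv_Gamma_le_of_pos : ∃ C : ℝ, 0 ≤ C ∧ ∀ x : ℝ, 0 < x → (Real.Gamma x)⁻¹ ≤ C := by
  obtain ⟨x₀, hx₀, hmin⟩ := Real.exists_isMinOn_Gamma_Ioi
  have hpos : 0 < Real.Gamma x₀ := Real.Gamma_pos_of_pos (by linarith [hx₀.1])
  exact ⟨(Real.Gamma x₀)⁻¹, by positivity, fun x hx => inv_anti₀ hpos (hmin hx)⟩

/-- On the nonpositive half-line the reflection formula bounds the reciprocal Gamma function. -/
lemma abs_inv_Gamma_le_Gamma_two_sub {x : ℝ} (hx : x ≤ 0) :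
    |(Real.Gamma x)⁻¹| ≤ Real.Gamma (2 - x) := by
  have hpos : 0 < Real.Gamma (1 - x) := Real.Gamma_pos_of_pos (by linarith)
  have hstep : Real.Gamma (1 - x) ≤ Real.Gamma (2 - x) := by
    rw [show 2 - x = (1 - x) + 1 by ring, Real.Gamma_add_one (by linarith)]
    exact le_mul_of_one_le_left hpos.le (by linarith)
  refine le_trans ?_ hstep
  rcases eq_or_ne (Real.Gamma x) 0 with h0 | h0
  · simpa [h0] using hpos.le
  have hrefl := Real.Gamma_mul_Gamma_one_sub x
  have hsin : Real.sin (Real.pi * x) ≠ 0 := by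
    intro h
    rw [h, div_zero] at hrefl
    exact (mul_ne_zero h0 hpos.ne') hrefl
  have hinv : (Real.Gamma x)⁻¹ = Real.Gamma (1 - x) * (Real.sin (Real.pi * x) / Real.pi) := by
    rw [eq_div_iff hsin] at hrefl
    rw [← mul_div_assoc, inv_eq_one_div, div_eq_div_iff h0 Real.pi_ne_zero]
    linarith
  rw [hinv, abs_mul, abs_of_pos hpos]
  refine mul_le_of_le_one_right hpos.le ?_
  rw [abs_div, abs_of_pos Real.pi_pos, div_le_one Real.pi_pos]
  linarith [Real.abs_sin_le_one (Real.pi * x), Real.pi_gt_three]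

/-- Log-convexity of the Gamma function along the segment from `2` to `n + 2`. -/
lemma Gamma_mul_nat_add_two_le {a : ℝ} (ha0 : 0 < a) (ha1 : a < 1) (n : ℕ) :
    Real.Gamma (a * n + 2) ≤ ((n + 1).factorial : ℝ) ^ a := by
  have h := Real.Gamma_mul_add_mul_le_rpow_Gamma_mul_rpow_Gamma (s := n + 2) (t := 2)
    (by positivity) two_pos ha0 (sub_pos.2 ha1) (by ring)
  have hfac : Real.Gamma ((n : ℝ) + 2) = ((n + 1).factorial : ℝ) := by
    rw [← Real.Gamma_nat_eq_factorial]
    push_cast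
    ring_nf
  rw [hfac, Real.Gamma_two, Real.one_rpow, mul_one] at h
  convert h using 2
  ring

/-- A power series whose coefficients are the inverses of a positive power of the factorials
converges everywhere. -/
lemma summable_pow_div_factorial_rpow {S b : ℝ} (hS : 0 < S) (hb : 0 < b) :
    Summable (fun n : ℕ => S ^ n / (n.factorial : ℝ) ^ b) := by
  refine summable_of_ratio_test_tendsto_lt_one zero_lt_one
    (Filter.Eventually.of_forall fun n => by positivity) ?_
  have hlim : Filter.Tendsto (fun n : ℕ => S / ((n + 1 : ℕ) : ℝ) ^ b) Filter.atTop (nhds 0) :=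
    Filter.Tendsto.const_div_atTop ((tendsto_rpow_atTop hb).comp
      (tendsto_natCast_atTop_atTop.comp (Filter.tendsto_add_atTop_nat 1))) S
  refine hlim.congr fun n => ?_
  have hn : (0 : ℝ) < (n.factorial : ℝ) ^ b := by positivity
  have hn1 : (0 : ℝ) < ((n + 1 : ℕ) : ℝ) ^ b := by positivity
  rw [Real.norm_of_nonneg (by positivity), Real.norm_of_nonneg (by positivity),
    Nat.factorial_succ, Nat.cast_mul, Real.mul_rpow (by positivity) (by positivity), pow_succ]
  field_simp

/-- The reciprocal Gamma function grows at most like a power `a < 1` of the factorial along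
an arithmetic progression with step larger than `-1`. -/
lemma exists_abs_inv_Gamma_le {lam μ : ℝ} (hlam : -1 < lam) (hμ : 0 < μ) :
    ∃ a C : ℝ, 0 < a ∧ a < 1 ∧ 0 ≤ C ∧ ∀ n : ℕ,
      |(Real.Gamma (lam * n + μ))⁻¹| ≤ C * ((n + 1).factorial : ℝ) ^ a := by
  obtain ⟨C, hC, hbound⟩ := exists_inv_Gamma_le_of_pos
  set a : ℝ := max (1 / 2) (-lam)
  have ha0 : 0 < a := lt_of_lt_of_le (by norm_num) (le_max_left _ _)
  have ha1 : a < 1 := max_lt (by norm_num) (by linarith)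
  refine ⟨a, C + 1, ha0, ha1, by positivity, fun n => ?_⟩
  have hfac : (1 : ℝ) ≤ ((n + 1).factorial : ℝ) ^ a :=
    Real.one_le_rpow (by exact_mod_cast Nat.one_le_iff_ne_zero.2 (Nat.factorial_ne_zero _)) ha0.le
  rcases lt_or_ge 0 (lam * n + μ) with hx | hx
  · rw [abs_of_pos (inv_pos.2 (Real.Gamma_pos_of_pos hx))]
    nlinarith [hbound _ hx]
  · have han : -lam * n ≤ a * n := mul_le_mul_of_nonneg_right (le_max_right _ _) n.cast_nonneg
    have hle : Real.Gamma (2 - (lam * n + μ)) ≤ Real.Gamma (a * n + 2) :=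
      Real.Gamma_strictMonoOn_Ici.monotoneOn (Set.mem_Ici.2 (by linarith))
        (Set.mem_Ici.2 (by nlinarith)) (by linarith)
    nlinarith [abs_inv_Gamma_le_Gamma_two_sub hx, Gamma_mul_nat_add_two_le ha0 ha1 n]

/-- The Wright function `W(z; λ, μ) = ∑ z^n/(n! Γ(λn + μ))` is an entire function:
for `λ > −1` and `μ > 0` the defining series converges absolutely for every `z ∈ ℂ`. -/
theorem wright_function_entire (lam μ : ℝ) (hlam : -1 < lam) (hμ : 0 < μ) (z : ℂ) :
    Summable (fun n : ℕ =>
      ‖z ^ n / ((n.factorial : ℂ) * Complex.Gamma ((lam * (n : ℝ) + μ : ℝ) : ℂ))‖) := by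
  obtain ⟨a, C, ha0, ha1, hC, hbound⟩ := exists_abs_inv_Gamma_le hlam hμ
  have hsum := (summable_pow_div_factorial_rpow (S := 2 * (‖z‖ + 1)) (by positivity)
    (sub_pos.2 ha1)).mul_left C
  refine Summable.of_nonneg_of_le (fun n => norm_nonneg _) (fun n => ?_) hsum
  have hfac : (0 : ℝ) < n.factorial := by positivity
  have hnorm : ‖z ^ n / ((n.factorial : ℂ) * Complex.Gamma ((lam * (n : ℝ) + μ : ℝ) : ℂ))‖
      = ‖z‖ ^ n / n.factorial * |(Real.Gamma (lam * n + μ))⁻¹| := by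
    rw [Complex.Gamma_ofReal, norm_div, norm_mul, norm_pow, Complex.norm_natCast,
      Complex.norm_real, Real.norm_eq_abs, abs_inv]
    field_simp
  have hn : ((n + 1).factorial : ℝ) ^ a ≤ 2 ^ n * (n.factorial : ℝ) ^ a := by
    rw [Nat.factorial_succ, Nat.cast_mul, Real.mul_rpow (by positivity) (by positivity)]
    refine mul_le_mul_of_nonneg_right ?_ (by positivity)
    calc ((n + 1 : ℕ) : ℝ) ^ a ≤ ((n + 1 : ℕ) : ℝ) ^ (1 : ℝ) :=
          Real.rpow_le_rpow_of_exponent_le (by simp) ha1.le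
      _ = ((n + 1 : ℕ) : ℝ) := Real.rpow_one _
      _ ≤ 2 ^ n := by exact_mod_cast Nat.lt_two_pow_self
  have hz : ‖z‖ ^ n ≤ (‖z‖ + 1) ^ n := pow_le_pow_left₀ (norm_nonneg z) (by linarith) n
  rw [hnorm]
  calc ‖z‖ ^ n / n.factorial * |(Real.Gamma (lam * n + μ))⁻¹|
      ≤ (‖z‖ + 1) ^ n / n.factorial * (C * (2 ^ n * (n.factorial : ℝ) ^ a)) := by
        gcongr
        exact (hbound n).trans (by gcongr)
    _ = C * ((2 * (‖z‖ + 1)) ^ n / (n.factorial : ℝ) ^ (1 - a)) := by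
        rw [Real.rpow_sub hfac, Real.rpow_one, mul_pow]
        field_simp
end

section
/- Verification of the Laplace-domain solution for the incomplete lumped formulation (equation (3.11) satisfies (3.2)–(3.5)). Let a, λ, α, γ > 0, s > 0 and C ∈ ℝ. Set K = −λ/a² + √(λ²/a⁴ + 4s/a²) and v(x,z) = C·exp( γx − x·√(γ² + s + (α/2)K) )·exp(−(z/2)K). Then: (i) s·v(x,z) = a²·∂²v/∂z²(x,z) − λ·∂v/∂z(x,z) for all x, z; (ii) s·v(x,0) = ∂²v/∂x²(x,0) − 2γ·∂v/∂x(x,0) + α·∂v/∂z(x,0) for all x; (iii) v(0,0) = C; (iv) v(x,z) → 0 as x² + z² → ∞ with x, z ≥ 0. -/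
open Real Filter Set

theorem deriv_const_mul_exp_mul (B k : ℝ) :
    deriv (fun y : ℝ => B * Real.exp (k * y)) = fun y => (B * k) * Real.exp (k * y) := by
  funext y
  have h : HasDerivAt (fun y : ℝ => B * Real.exp (k * y))
      (B * (Real.exp (k * y) * (k * 1))) y :=
    (((hasDerivAt_id y).const_mul k).exp).const_mul B
  rw [h.deriv]
  ring

theorem iteratedDeriv_two_const_mul_exp_mul (B k : ℝ) :
    iteratedDeriv 2 (fun y : ℝ => B * Real.exp (k * y)) =
      fun y => (B * k * k) * Real.exp (k * y) := by
  rw [iteratedDeriv_succ, iteratedDeriv_one, deriv_const_mul_exp_mul, deriv_const_mul_exp_mul]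

/-- A positive linear form tends to infinity along the closed first quadrant. -/
theorem tendsto_linear_form_quadrant_atTop {m k : ℝ} (hm : 0 < m) (hk : 0 < k) :
    Tendsto (fun w : ℝ × ℝ => m * w.1 + k * w.2)
      ((comap (fun w : ℝ × ℝ => w.1 ^ 2 + w.2 ^ 2) atTop) ⊓
        𝓟 (Ici (0 : ℝ) ×ˢ Ici (0 : ℝ))) atTop := by
  have hsqrt : Tendsto (fun w : ℝ × ℝ => min m k * √(w.1 ^ 2 + w.2 ^ 2))
      ((comap (fun w : ℝ × ℝ => w.1 ^ 2 + w.2 ^ 2) atTop) ⊓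
        𝓟 (Ici (0 : ℝ) ×ˢ Ici (0 : ℝ))) atTop :=
    ((Real.tendsto_sqrt_atTop.comp tendsto_comap).const_mul_atTop (lt_min hm hk)).mono_left
      inf_le_left
  refine tendsto_atTop_mono' _ ?_ hsqrt
  filter_upwards [mem_inf_of_right (mem_principal_self _)] with w hw
  obtain ⟨h1, h2⟩ : 0 ≤ w.1 ∧ 0 ≤ w.2 := hw
  have hle : √(w.1 ^ 2 + w.2 ^ 2) ≤ w.1 + w.2 := by
    rw [Real.sqrt_le_left (by positivity)]
    nlinarith [mul_nonneg h1 h2]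
  calc min m k * √(w.1 ^ 2 + w.2 ^ 2) ≤ min m k * (w.1 + w.2) :=
        mul_le_mul_of_nonneg_left hle (lt_min hm hk).le
    _ = min m k * w.1 + min m k * w.2 := mul_add _ _ _
    _ ≤ m * w.1 + k * w.2 := by
        gcongr
        · exact min_le_left m k
        · exact min_le_right m k

/-- Verification of the Laplace-domain solution (3.11) of the incomplete lumped
formulation: with `K = −λ/a² + √(λ²/a⁴ + 4s/a²)` and
`v(x,z) = C e^{γx − x√(γ² + s + (α/2)K)} e^{−(z/2)K}`, the function `v`
satisfies (3.2)–(3.5). -/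
theorem laplace_domain_incomplete_lumped (a lam α γ s C : ℝ)
    (ha : 0 < a) (hlam : 0 < lam) (hα : 0 < α) (hγ : 0 < γ) (hs : 0 < s)
    (K : ℝ) (hK : K = -lam / a ^ 2 + Real.sqrt (lam ^ 2 / a ^ 4 + 4 * s / a ^ 2))
    (v : ℝ → ℝ → ℝ)
    (hv : ∀ x z : ℝ, v x z =
      C * Real.exp (γ * x - x * Real.sqrt (γ ^ 2 + s + (α / 2) * K)) *
        Real.exp (-(z / 2) * K)) :
    (∀ x z : ℝ, s * v x z =
      a ^ 2 * iteratedDeriv 2 (fun z' => v x z') z - lam * deriv (fun z' => v x z') z) ∧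
    (∀ x : ℝ, s * v x 0 =
      iteratedDeriv 2 (fun x' => v x' 0) x - 2 * γ * deriv (fun x' => v x' 0) x +
        α * deriv (fun z' => v x z') 0) ∧
    v 0 0 = C ∧
    Tendsto (fun w : ℝ × ℝ => v w.1 w.2)
      ((comap (fun w : ℝ × ℝ => w.1 ^ 2 + w.2 ^ 2) atTop) ⊓
        𝓟 (Ici (0 : ℝ) ×ˢ Ici (0 : ℝ))) (nhds 0) := by
  have hK_char : a ^ 2 * K ^ 2 / 4 + lam * K / 2 = s := by
    have hsq : (K + lam / a ^ 2) ^ 2 = lam ^ 2 / a ^ 4 + 4 * s / a ^ 2 := by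
      rw [← Real.sq_sqrt (by positivity : 0 ≤ lam ^ 2 / a ^ 4 + 4 * s / a ^ 2), hK]
      ring
    field_simp at hsq
    have ha2 : a ^ 2 ≠ 0 := by positivity
    apply mul_left_cancel₀ ha2
    linarith
  have hK_pos : 0 < K := by
    have hlt : lam / a ^ 2 < √(lam ^ 2 / a ^ 4 + 4 * s / a ^ 2) := by
      apply Real.lt_sqrt_of_sq_lt
      have hpos : 0 < 4 * s / a ^ 2 := by positivity
      have heq : (lam / a ^ 2) ^ 2 = lam ^ 2 / a ^ 4 := by ring
      linarith
    rw [hK, neg_div]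
    linarith
  set R := √(γ ^ 2 + s + (α / 2) * K) with hR
  have hR_sq : R ^ 2 = γ ^ 2 + s + (α / 2) * K := Real.sq_sqrt (by positivity)
  have hR_gt : γ < R := by
    apply Real.lt_sqrt_of_sq_lt
    have hpos : 0 < (α / 2) * K := by positivity
    linarith
  have hvz (x : ℝ) : (fun z => v x z) =
      fun z => (C * Real.exp ((γ - R) * x)) * Real.exp (-(K / 2) * z) := by
    funext z
    rw [hv]
    ring_nf
  have hvx : (fun x => v x 0) = fun x => C * Real.exp ((γ - R) * x) := by
    funext x
    rw [hv]
    simp only [zero_div, neg_zero, zero_mul, Real.exp_zero, mul_one]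
    ring_nf
  refine ⟨fun x z => ?_, fun x => ?_, ?_, ?_⟩
  · rw [hvz, iteratedDeriv_two_const_mul_exp_mul, deriv_const_mul_exp_mul,
      congrFun (hvz x) z, ← hK_char]
    ring
  · rw [hvz, hvx, iteratedDeriv_two_const_mul_exp_mul, deriv_const_mul_exp_mul,
      deriv_const_mul_exp_mul, congrFun hvx x]
    simp only [mul_zero, Real.exp_zero, mul_one]
    linear_combination (-C * Real.exp ((γ - R) * x)) * hR_sq
  · simp [hv]
  · have hlin := tendsto_linear_form_quadrant_atTop (sub_pos.mpr hR_gt) (half_pos hK_pos)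
    have hexp := (Real.tendsto_exp_neg_atTop_nhds_zero.comp hlin).const_mul C
    rw [mul_zero] at hexp
    refine hexp.congr fun w => ?_
    rw [hv, mul_assoc, ← Real.exp_add, Function.comp_apply]
    ring_nf
end
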